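/- arXiv:1802.02328 — 5 statements merged into one kernel-verified Lean document; each statement's English description precedes it below -/
import Mathlib

section
/- Strong-constraint a posteriori error bound (Proposition 1). Suppose (y^k)_{k=0..K} ⊂ Y, (p^k)_{k=1..K+1} ⊂ Y and u ∈ U satisfy the full-order optimality system: y^0 = u; m(y^k − y^{k−1}, φ) + τ a(y^k, φ) = τ f(φ) for all φ ∈ Y and k = 1,…,K; p^{K+1} = 0; m(φ, p^k − p^{k+1}) + τ a(φ, p^k) = τ (z_d^k − C y^k, C φ)_D for all φ ∈ Y and k = 1,…,K; and (u − u_d, ψ)_U − m(ψ, p^1) = 0 for all ψ ∈ U. Let (y_N^k)_{k=0..K} ⊂ Y, (p_N^k)_{k=1..K+1} ⊂ Y and u_N ∈ U be any candidate (e.g.\ the reduced-basis optimal solution) with y_N^0 = u_N and p_N^{K+1} = 0, and define the residuals r_y^k(φ) = f(φ) − a(y_N^k, φ) − (1/τ) m(y_N^k − y_N^{k−1}, φ), r_p^k(φ) = (z_d^k − C y_N^k, C φ)_D − a(φ, p_N^k) − (1/τ) m(φ, p_N^k − p_N^{k+1}) for φ ∈ Y, r_u(ψ) = m(ψ, p_N^1)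 − (u_N − u_d, ψ)_U for ψ ∈ U, and set R_y = (τ Σ_{k=1}^K ‖r_y^k‖_{Y'}²)^{1/2}, R_p = (τ Σ_{k=1}^K ‖r_p^k‖_{Y'}²)^{1/2}. Then ‖u − u_N‖_U ≤ c₁ + √(c₁² + c₂), where c₁ = (1/2)(‖r_u‖_{U'} + α_LB^{−1/2} R_p) and c₂ = ((√2 + 1)/α_LB) R_y R_p + (γ_c²/(2 α_LB²)) R_y². -/
set_option autoImplicit false

open Finset RealInnerProductSpace

/-- Dual norm of a functional `r` over the nonzero elements of `S`,
with respect to the norm function `nrm`. -/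
noncomputable def dualNorm {Y : Type*} [Zero Y] (nrm : Y → ℝ) (S : Set Y) (r : Y → ℝ) : ℝ :=
  sSup {x : ℝ | ∃ v ∈ S, v ≠ 0 ∧ x = r v / nrm v}

/-!
The errors `e k = y k - yN k` and `q k = p k - pN k` solve the optimality system with the residuals
as data. Testing its adjoint equation with `e` and its state equation with `q` and eliminating the
common terms expresses `⟪e 0, q 1⟫`, hence through the optimality condition also `‖e 0‖ ^ 2`, by
residuals applied to errors and the term `-τ ∑ ‖C (e k)‖ ^ 2`. The energy estimates of the two
implicit Euler schemes bound `e` and `q` in terms of `‖e 0‖`, the residuals and `C e`; the observed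
error `C e` is absorbed by the negative term, and a quadratic inequality for `‖e 0‖` remains.
-/

lemma apply_le_dualNorm_mul {E : Type*} [AddCommGroup E] [Module ℝ E] (n : Seminorm ℝ E)
    {S : Set E} {r : E → ℝ} {c : ℝ} (hr : ∀ v ∈ S, r v ≤ c * n v) {v : E} (hv : v ∈ S) :
    r v ≤ dualNorm n S r * n v := by
  rcases (apply_nonneg n v).eq_or_lt with hnv | hnv
  · simpa only [← hnv, mul_zero] using hr v hv
  · have hv0 : v ≠ 0 := fun h => hnv.ne' (by rw [h, map_zero])
    refine (div_le_iff₀ hnv).1 (le_csSup ⟨|c|, ?_⟩ ⟨v, hv, hv0, rfl⟩)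
    rintro _ ⟨w, hw, -, rfl⟩
    exact div_le_of_le_mul₀ (apply_nonneg n w) (abs_nonneg c) <|
      (hr w hw).trans (mul_le_mul_of_nonneg_right (le_abs_self c) (apply_nonneg n w))

lemma apply_le_dualNorm_mul_norm {E : Type*} [SeminormedAddCommGroup E] [NormedSpace ℝ E]
    {r : E →ₗ[ℝ] ℝ} (hr : Continuous r) (v : E) :
    r v ≤ dualNorm (fun v : E => ‖v‖) Set.univ r * ‖v‖ :=
  let r' : E →L[ℝ] ℝ := ⟨r, hr⟩
  apply_le_dualNorm_mul (normSeminorm ℝ E)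
    (fun w _ => (Real.le_norm_self (r w)).trans (r'.le_opNorm w)) (Set.mem_univ v)

section TimeNorm

/-- The discrete `L²(0, T)` norm of the grid function `n 1, …, n K` with time step `τ`; the value
`n 0` does not contribute. -/
noncomputable def timeL2Norm (τ : ℝ) (K : ℕ) (n : ℕ → ℝ) : ℝ :=
  √(τ * ∑ k ∈ Icc 1 K, n k ^ 2)

variable {τ : ℝ} {K : ℕ}

lemma timeL2Norm_nonneg (n : ℕ → ℝ) : 0 ≤ timeL2Norm τ K n := Real.sqrt_nonneg _

lemma timeL2Norm_sq (hτ : 0 ≤ τ) (n : ℕ → ℝ) :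
    timeL2Norm τ K n ^ 2 = τ * ∑ k ∈ Icc 1 K, n k ^ 2 :=
  Real.sq_sqrt (mul_nonneg hτ (sum_nonneg fun _ _ => sq_nonneg _))

lemma timeL2Norm_const_mul (c : ℝ) (n : ℕ → ℝ) :
    timeL2Norm τ K (fun k => c * n k) = |c| * timeL2Norm τ K n := by
  simp only [timeL2Norm, mul_pow, ← mul_sum, mul_left_comm τ]
  rw [Real.sqrt_mul (sq_nonneg c), Real.sqrt_sq_eq_abs]

lemma mul_sum_le_timeL2Norm_mul (hτ : 0 ≤ τ) {x d n : ℕ → ℝ}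
    (h : ∀ k ∈ Icc 1 K, x k ≤ d k * n k) :
    τ * ∑ k ∈ Icc 1 K, x k ≤ timeL2Norm τ K d * timeL2Norm τ K n :=
  calc τ * ∑ k ∈ Icc 1 K, x k
      ≤ τ * (√(∑ k ∈ Icc 1 K, d k ^ 2) * √(∑ k ∈ Icc 1 K, n k ^ 2)) :=
        mul_le_mul_of_nonneg_left
          ((sum_le_sum h).trans (Real.sum_mul_le_sqrt_mul_sqrt _ d n)) hτ
    _ = timeL2Norm τ K d * timeL2Norm τ K n := by
        rw [timeL2Norm, timeL2Norm, Real.sqrt_mul hτ, Real.sqrt_mul hτ, mul_mul_mul_comm,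
          Real.mul_self_sqrt hτ]

end TimeNorm

section Telescoping

variable {G : Type*} [AddCommGroup G]

lemma sum_Icc_one_succ_sub (g : ℕ → G) (K : ℕ) :
    ∑ k ∈ Icc 1 K, (g (k + 1) - g k) = g (K + 1) - g 1 := by
  rw [← Ico_add_one_right_eq_Icc, sum_Ico_sub g (Nat.le_add_left 1 K)]

lemma sum_Icc_one_sub_pred (g : ℕ → G) (K : ℕ) :
    ∑ k ∈ Icc 1 K, (g k - g (k - 1)) = g K - g 0 := by
  simpa only [Nat.add_sub_cancel, Nat.sub_self] using sum_Icc_one_succ_sub (fun k => g (k - 1)) K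

end Telescoping

lemma half_norm_sq_sub_le_inner_sub {F : Type*} [SeminormedAddCommGroup F] [InnerProductSpace ℝ F]
    (x z : F) : (‖x‖ ^ 2 - ‖z‖ ^ 2) / 2 ≤ ⟪x - z, x⟫ := by
  have h := norm_sub_sq_real x z
  rw [inner_sub_left, real_inner_self_eq_norm_sq, real_inner_comm]
  linarith [sq_nonneg ‖x - z‖]

section ImplicitEuler

variable {H Y : Type*} [SeminormedAddCommGroup H] [InnerProductSpace ℝ H]

section Scheme

variable [AddCommGroup Y] [Module ℝ Y]

/-- The forward implicit Euler scheme `m(y k - y (k - 1), φ) + τ a(y k, φ) = τ r k φ` on the time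
steps `1, …, K`: the state equation with right-hand side `r`. -/
def IsForwardEuler (ι : Y →ₗ[ℝ] H) (a : Y →ₗ[ℝ] Y →ₗ[ℝ] ℝ) (τ : ℝ) (K : ℕ) (y : ℕ → Y)
    (r : ℕ → Y → ℝ) : Prop :=
  ∀ k, 1 ≤ k → k ≤ K → ∀ φ : Y, ⟪ι (y k - y (k - 1)), ι φ⟫ + τ * a (y k) φ = τ * r k φ

/-- The implicit Euler scheme `m(φ, p k - p (k + 1)) + τ a(φ, p k) = τ r k φ` run backwards in time
over the steps `K, …, 1`: the adjoint equation with right-hand side `r`. -/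
def IsBackwardEuler (ι : Y →ₗ[ℝ] H) (a : Y →ₗ[ℝ] Y →ₗ[ℝ] ℝ) (τ : ℝ) (K : ℕ) (p : ℕ → Y)
    (r : ℕ → Y → ℝ) : Prop :=
  ∀ k, 1 ≤ k → k ≤ K → ∀ φ : Y, ⟪ι φ, ι (p k - p (k + 1))⟫ + τ * a φ (p k) = τ * r k φ

variable {ι : Y →ₗ[ℝ] H} {a : Y →ₗ[ℝ] Y →ₗ[ℝ] ℝ} {τ : ℝ} {K : ℕ} {y y' p p' : ℕ → Y}
  {f r s : ℕ → Y → ℝ}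

lemma IsForwardEuler.sub_of_residual (hτ : τ ≠ 0) (hy : IsForwardEuler ι a τ K y f)
    (hr : ∀ k, 1 ≤ k → k ≤ K → ∀ φ : Y,
      r k φ = f k φ - a (y' k) φ - (1 / τ) * ⟪ι (y' k - y' (k - 1)), ι φ⟫) :
    IsForwardEuler ι a τ K (y - y') r := by
  intro k hk hkK φ
  have hyk := hy k hk hkK φ
  simp only [hr k hk hkK φ, Pi.sub_apply, map_sub, inner_sub_left, LinearMap.sub_apply] at hyk ⊢
  field_simp
  linarith

lemma IsBackwardEuler.sub_of_residual (hτ : τ ≠ 0) (hp : IsBackwardEuler ι a τ K p f)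
    {g : ℕ → Y → ℝ} (hr : ∀ k, 1 ≤ k → k ≤ K → ∀ φ : Y,
      r k φ = g k φ - a φ (p' k) - (1 / τ) * ⟪ι φ, ι (p' k - p' (k + 1))⟫) :
    IsBackwardEuler ι a τ K (p - p') (fun k φ => r k φ + (f k φ - g k φ)) := by
  intro k hk hkK φ
  have hpk := hp k hk hkK φ
  simp only [hr k hk hkK φ, Pi.sub_apply, map_sub, inner_sub_right] at hpk ⊢
  field_simp
  linarith

lemma IsForwardEuler.inner_add_sum_eq (hy : IsForwardEuler ι a τ K y r)
    (hp : IsBackwardEuler ι a τ K p s) :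
    ⟪ι (y 0), ι (p 1)⟫ + τ * ∑ k ∈ Icc 1 K, r k (p k)
      = ⟪ι (y K), ι (p (K + 1))⟫ + τ * ∑ k ∈ Icc 1 K, s k (y k) := by
  have hstep : ∀ k ∈ Icc 1 K, ⟪ι (y k), ι (p (k + 1))⟫ - ⟪ι (y (k - 1)), ι (p k)⟫
      = τ * r k (p k) - τ * s k (y k) := by
    intro k hk
    obtain ⟨hk, hkK⟩ := mem_Icc.1 hk
    rw [← hy k hk hkK, ← hp k hk hkK]
    simp only [map_sub, inner_sub_left, inner_sub_right]
    ring
  have hsum := sum_Icc_one_succ_sub (fun k => ⟪ι (y (k - 1)), ι (p k)⟫) K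
  simp only [Nat.add_sub_cancel, Nat.sub_self] at hsum
  rw [sum_congr rfl hstep, sum_sub_distrib, ← mul_sum, ← mul_sum] at hsum
  linarith

end Scheme

variable [SeminormedAddCommGroup Y] [NormedSpace ℝ Y] {ι : Y →ₗ[ℝ] H}
  {a : Y →ₗ[ℝ] Y →ₗ[ℝ] ℝ} {τ α : ℝ} {K : ℕ} {e q : ℕ → Y} {r s : ℕ → Y → ℝ}

lemma IsForwardEuler.energy_le (he : IsForwardEuler ι a τ K e r) (hτ : 0 ≤ τ)
    (ha : ∀ v, α * ‖v‖ ^ 2 ≤ a v v) :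
    α * timeL2Norm τ K (fun k => ‖e k‖) ^ 2 + ‖ι (e K)‖ ^ 2 / 2
      ≤ ‖ι (e 0)‖ ^ 2 / 2 + τ * ∑ k ∈ Icc 1 K, r k (e k) := by
  have hstep : ∀ k ∈ Icc 1 K, ‖ι (e k)‖ ^ 2 - ‖ι (e (k - 1))‖ ^ 2
      ≤ 2 * τ * r k (e k) - 2 * τ * α * ‖e k‖ ^ 2 := by
    intro k hk
    have heq := he k (mem_Icc.1 hk).1 (mem_Icc.1 hk).2 (e k)
    have hm := half_norm_sq_sub_le_inner_sub (ι (e k)) (ι (e (k - 1)))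
    rw [map_sub] at heq
    linarith [mul_le_mul_of_nonneg_left (ha (e k)) hτ]
  have hsum := sum_le_sum hstep
  rw [sum_Icc_one_sub_pred (fun k => ‖ι (e k)‖ ^ 2), sum_sub_distrib, ← mul_sum, ← mul_sum] at hsum
  rw [timeL2Norm_sq hτ]
  linarith

lemma IsBackwardEuler.energy_le (hq : IsBackwardEuler ι a τ K q s) (hτ : 0 ≤ τ)
    (ha : ∀ v, α * ‖v‖ ^ 2 ≤ a v v) :
    α * timeL2Norm τ K (fun k => ‖q k‖) ^ 2 + ‖ι (q 1)‖ ^ 2 / 2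
      ≤ ‖ι (q (K + 1))‖ ^ 2 / 2 + τ * ∑ k ∈ Icc 1 K, s k (q k) := by
  have hstep : ∀ k ∈ Icc 1 K, 2 * τ * α * ‖q k‖ ^ 2 - 2 * τ * s k (q k)
      ≤ ‖ι (q (k + 1))‖ ^ 2 - ‖ι (q k)‖ ^ 2 := by
    intro k hk
    have heq := hq k (mem_Icc.1 hk).1 (mem_Icc.1 hk).2 (q k)
    have hm := half_norm_sq_sub_le_inner_sub (ι (q k)) (ι (q (k + 1)))
    rw [map_sub, real_inner_comm] at heq
    linarith [mul_le_mul_of_nonneg_left (ha (q k)) hτ]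
  have hsum := sum_le_sum hstep
  rw [sum_Icc_one_succ_sub (fun k => ‖ι (q k)‖ ^ 2), sum_sub_distrib, ← mul_sum, ← mul_sum] at hsum
  rw [timeL2Norm_sq hτ]
  linarith

end ImplicitEuler

section QuadraticInequalities

lemma le_add_sqrt_of_sq_le {w b c : ℝ} (h : w ^ 2 ≤ 2 * b * w + c) : w ≤ b + √(b ^ 2 + c) := by
  have hsq : (w - b) ^ 2 ≤ b ^ 2 + c := by linarith [sub_sq w b]
  linarith [Real.le_sqrt_of_sq_le hsq]

lemma le_div_of_mul_sq_le {α x b : ℝ} (hα : 0 < α) (hb : 0 ≤ b) (h : α * x ^ 2 ≤ b * x) :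
    x ≤ b / α := by
  rcases le_or_gt x 0 with hx | hx
  · exact hx.trans (by positivity)
  · refine (le_div_iff₀' hα).2 (le_of_mul_le_mul_right ?_ hx)
    rwa [mul_assoc, ← sq]

lemma le_div_sqrt_add_div_of_mul_sq_le {α x b w : ℝ} (hα : 0 < α) (hb : 0 ≤ b) (hw : 0 ≤ w)
    (h : α * x ^ 2 ≤ w ^ 2 + b * x) : x ≤ w / √α + b / α := by
  obtain ⟨σ, hσ, rfl⟩ : ∃ σ, 0 < σ ∧ α = σ ^ 2 :=
    ⟨√α, Real.sqrt_pos.2 hα, (Real.sq_sqrt hα.le).symm⟩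
  rw [Real.sqrt_sq hσ.le]
  by_contra! hx
  have hwx : w < σ * x - b / σ := by
    have := mul_lt_mul_of_pos_left hx hσ
    have hexpand : σ * (w / σ + b / σ ^ 2) = w + b / σ := by field_simp
    linarith
  have hbσ : 0 ≤ b / σ := by positivity
  have hbx : b * x = b / σ * (σ * x) := by field_simp
  have hprod : w * w < (σ * x - b / σ) * (σ * x) :=
    mul_lt_mul'' hwx (hwx.trans_le (sub_le_self _ hbσ)) hw hw
  linarith

end QuadraticInequalities

section ErrorSystem

variable {H Y D : Type*} [SeminormedAddCommGroup H] [InnerProductSpace ℝ H]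
  [SeminormedAddCommGroup Y] [NormedSpace ℝ Y] [SeminormedAddCommGroup D] [InnerProductSpace ℝ D]
  {ι : Y →ₗ[ℝ] H} {a : Y →ₗ[ℝ] Y →ₗ[ℝ] ℝ} {C : Y →ₗ[ℝ] D} {τ α γ : ℝ} {K : ℕ} {e q : ℕ → Y}
  {δ ε : ℕ → ℝ}

lemma IsForwardEuler.timeL2Norm_le {r : ℕ → Y → ℝ} (he : IsForwardEuler ι a τ K e r)
    (hτ : 0 ≤ τ) (hα : 0 < α) (ha : ∀ v, α * ‖v‖ ^ 2 ≤ a v v)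
    (hr : ∀ k ∈ Icc 1 K, ∀ φ, r k φ ≤ δ k * ‖φ‖) :
    timeL2Norm τ K (fun k => ‖e k‖) ≤ ‖ι (e 0)‖ / √α + timeL2Norm τ K δ / α := by
  have henergy := he.energy_le hτ ha
  have hres := mul_sum_le_timeL2Norm_mul hτ fun k hk => hr k hk (e k)
  refine le_div_sqrt_add_div_of_mul_sq_le hα (timeL2Norm_nonneg δ) (norm_nonneg _) ?_
  linarith [sq_nonneg ‖ι (e K)‖, sq_nonneg ‖ι (e 0)‖]

lemma IsBackwardEuler.timeL2Norm_le {s : ℕ → Y → ℝ} {d : ℕ → D}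
    (hq : IsBackwardEuler ι a τ K q fun k φ => s k φ - ⟪d k, C φ⟫)
    (hqfin : q (K + 1) = 0) (hτ : 0 ≤ τ) (hα : 0 < α) (ha : ∀ v, α * ‖v‖ ^ 2 ≤ a v v)
    (hC : ∀ v, ‖C v‖ ≤ γ * ‖v‖) (hs : ∀ k ∈ Icc 1 K, ∀ φ, s k φ ≤ ε k * ‖φ‖) :
    timeL2Norm τ K (fun k => ‖q k‖)
      ≤ (timeL2Norm τ K ε + |γ| * timeL2Norm τ K fun k => ‖d k‖) / α := by
  have henergy := hq.energy_le hτ ha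
  have hobs : ∀ k, -⟪d k, C (q k)⟫ ≤ ‖d k‖ * (γ * ‖q k‖) := fun k =>
    calc -⟪d k, C (q k)⟫
        ≤ ‖d k‖ * ‖C (q k)‖ := (neg_le_abs _).trans (abs_real_inner_le_norm _ _)
      _ ≤ ‖d k‖ * (γ * ‖q k‖) := mul_le_mul_of_nonneg_left (hC _) (norm_nonneg _)
  have hres_sum := mul_sum_le_timeL2Norm_mul hτ fun k hk => hs k hk (q k)
  have hobs_sum := mul_sum_le_timeL2Norm_mul (K := K) hτ fun k _ => hobs k
  rw [timeL2Norm_const_mul, sum_neg_distrib] at hobs_sum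
  rw [hqfin, map_zero, norm_zero, sum_sub_distrib] at henergy
  refine le_div_of_mul_sq_le hα
    (add_nonneg (timeL2Norm_nonneg _) (mul_nonneg (abs_nonneg γ) (timeL2Norm_nonneg _))) ?_
  linarith [sq_nonneg ‖ι (q 1)‖]

lemma inner_initial_error_add_sq_le {r : ℕ → Y →ₗ[ℝ] ℝ} {s : ℕ → Y → ℝ}
    (he : IsForwardEuler ι a τ K e fun k => r k)
    (hq : IsBackwardEuler ι a τ K q fun k φ => s k φ - ⟪C (e k), C φ⟫)
    (hqfin : q (K + 1) = 0) (hτ : 0 ≤ τ)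
    (hr : ∀ k ∈ Icc 1 K, ∀ φ, r k φ ≤ δ k * ‖φ‖) (hs : ∀ k ∈ Icc 1 K, ∀ φ, s k φ ≤ ε k * ‖φ‖) :
    ⟪ι (e 0), ι (q 1)⟫ + timeL2Norm τ K (fun k => ‖C (e k)‖) ^ 2
      ≤ timeL2Norm τ K ε * timeL2Norm τ K (fun k => ‖e k‖)
        + timeL2Norm τ K δ * timeL2Norm τ K (fun k => ‖q k‖) := by
  have hdual := he.inner_add_sum_eq hq
  simp only [hqfin, map_zero, inner_zero_right, zero_add, real_inner_self_eq_norm_sq,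
    sum_sub_distrib] at hdual
  have hs_sum := mul_sum_le_timeL2Norm_mul hτ fun k hk => hs k hk (e k)
  have hr_sum := mul_sum_le_timeL2Norm_mul hτ fun k hk => hr k hk (-q k)
  simp only [map_neg, norm_neg, sum_neg_distrib] at hr_sum
  rw [timeL2Norm_sq hτ]
  linarith

lemma norm_initial_error_le {r : ℕ → Y →ₗ[ℝ] ℝ} {s : ℕ → Y → ℝ} {ρ : ℝ}
    (he : IsForwardEuler ι a τ K e fun k => r k)
    (hq : IsBackwardEuler ι a τ K q fun k φ => s k φ - ⟪C (e k), C φ⟫)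
    (hqfin : q (K + 1) = 0) (hτ : 0 ≤ τ) (hα : 0 < α) (ha : ∀ v, α * ‖v‖ ^ 2 ≤ a v v)
    (hC : ∀ v, ‖C v‖ ≤ γ * ‖v‖)
    (hopt : ‖ι (e 0)‖ ^ 2 ≤ ρ * ‖ι (e 0)‖ + ⟪ι (e 0), ι (q 1)⟫)
    (hr : ∀ k ∈ Icc 1 K, ∀ φ, r k φ ≤ δ k * ‖φ‖) (hs : ∀ k ∈ Icc 1 K, ∀ φ, s k φ ≤ ε k * ‖φ‖) :
    ‖ι (e 0)‖ ≤ 1 / 2 * (ρ + 1 / √α * timeL2Norm τ K ε)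
      + √((1 / 2 * (ρ + 1 / √α * timeL2Norm τ K ε)) ^ 2
        + (2 / α * timeL2Norm τ K δ * timeL2Norm τ K ε
          + γ ^ 2 / (4 * α ^ 2) * timeL2Norm τ K δ ^ 2)) := by
  have hdual := inner_initial_error_add_sq_le he hq hqfin hτ hr hs
  have hE := mul_le_mul_of_nonneg_left (he.timeL2Norm_le hτ hα ha hr)
    (timeL2Norm_nonneg (τ := τ) (K := K) ε)
  have hQ := mul_le_mul_of_nonneg_left (hq.timeL2Norm_le hqfin hτ hα ha hC hs)
    (timeL2Norm_nonneg (τ := τ) (K := K) δ)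
  set Ry := timeL2Norm τ K δ
  set Rp := timeL2Norm τ K ε
  set S := timeL2Norm τ K fun k => ‖C (e k)‖
  have hyoung : Ry * (|γ| * S / α) ≤ S ^ 2 + γ ^ 2 / (4 * α ^ 2) * Ry ^ 2 := by
    have hsq := sq_nonneg (S - |γ| * Ry / (2 * α))
    have hexpand : (S - |γ| * Ry / (2 * α)) ^ 2
        = S ^ 2 - Ry * (|γ| * S / α) + γ ^ 2 / (4 * α ^ 2) * Ry ^ 2 := by
      rw [← sq_abs γ]
      field_simp
      ring
    linarith
  refine le_add_sqrt_of_sq_le ?_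
  calc ‖ι (e 0)‖ ^ 2
      ≤ ρ * ‖ι (e 0)‖ + Rp * (‖ι (e 0)‖ / √α + Ry / α) + Ry * ((Rp + |γ| * S) / α) - S ^ 2 := by
        linarith
    _ = ρ * ‖ι (e 0)‖ + Rp * (‖ι (e 0)‖ / √α) + 2 / α * Ry * Rp
          + (Ry * (|γ| * S / α) - S ^ 2) := by ring
    _ ≤ 2 * (1 / 2 * (ρ + 1 / √α * Rp)) * ‖ι (e 0)‖
          + (2 / α * Ry * Rp + γ ^ 2 / (4 * α ^ 2) * Ry ^ 2) := by
        linear_combination hyoung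

end ErrorSystem

lemma sq_norm_le_of_optimality {H Y : Type*} [SeminormedAddCommGroup H] [InnerProductSpace ℝ H]
    [AddCommGroup Y] [Module ℝ Y] {ι : Y →ₗ[ℝ] H} {U : Submodule ℝ Y} {u uN ud p pN : Y}
    {ru : Y → ℝ} (hu : u ∈ U) (huN : uN ∈ U)
    (hopt : ∀ ψ ∈ U, ⟪ι (u - ud), ι ψ⟫ - ⟪ι ψ, ι p⟫ = 0)
    (hru : ∀ ψ ∈ U, ru ψ = ⟪ι ψ, ι pN⟫ - ⟪ι (uN - ud), ι ψ⟫) :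
    ‖ι (u - uN)‖ ^ 2 ≤ dualNorm (fun v : Y => ‖ι v‖) U ru * ‖ι (u - uN)‖
      + ⟪ι (u - uN), ι (p - pN)⟫ := by
  have hmem : u - uN ∈ U := U.sub_mem hu huN
  have hbound : ∀ ψ ∈ U, ru ψ ≤ ‖ι pN - ι (uN - ud)‖ * ‖ι ψ‖ := fun ψ hψ => by
    rw [hru ψ hψ, real_inner_comm, ← inner_sub_left]
    exact real_inner_le_norm _ _
  have hdual : ru (u - uN) ≤ dualNorm (fun v : Y => ‖ι v‖) U ru * ‖ι (u - uN)‖ :=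
    apply_le_dualNorm_mul ((normSeminorm ℝ H).comp ι) hbound hmem
  have heq : ‖ι (u - uN)‖ ^ 2 = ru (u - uN) + ⟪ι (u - uN), ι (p - pN)⟫ := by
    have h := hopt _ hmem
    rw [hru _ hmem, ← real_inner_self_eq_norm_sq]
    simp only [map_sub, inner_sub_left, inner_sub_right] at h ⊢
    linarith
  linarith

theorem strong_constraint_a_posteriori_error_bound_general
    {H Y D : Type*} [SeminormedAddCommGroup H] [InnerProductSpace ℝ H]
    [SeminormedAddCommGroup Y] [NormedSpace ℝ Y]
    [SeminormedAddCommGroup D] [InnerProductSpace ℝ D]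
    (ι : Y →ₗ[ℝ] H) (U : Submodule ℝ Y) (a : Y →ₗ[ℝ] Y →ₗ[ℝ] ℝ)
    (τ : ℝ) (hτ : 0 < τ) (K : ℕ)
    (αLB : ℝ) (hαLB : 0 < αLB) (hcoer : ∀ v : Y, αLB * ‖v‖ ^ 2 ≤ a v v)
    (C : Y →ₗ[ℝ] D) (γc : ℝ) (hγc : ∀ v : Y, ‖C v‖ ≤ γc * ‖v‖)
    (f : Y →ₗ[ℝ] ℝ) (zd : ℕ → D) (ud : Y)
    (y p yN pN : ℕ → Y) (u uN : Y) (hu : u ∈ U) (huN : uN ∈ U)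
    (hy0 : y 0 = u) (hstate : IsForwardEuler ι a τ K y fun _ => f)
    (hpfin : p (K + 1) = 0)
    (hadj : IsBackwardEuler ι a τ K p fun k φ => ⟪zd k - C (y k), C φ⟫)
    (hopt : ∀ ψ ∈ U, ⟪ι (u - ud), ι ψ⟫ - ⟪ι ψ, ι (p 1)⟫ = 0)
    (hyN0 : yN 0 = uN) (hpNfin : pN (K + 1) = 0)
    (ry rp : ℕ → (Y →ₗ[ℝ] ℝ)) (ru : Y →ₗ[ℝ] ℝ)
    (hry_cont : ∀ k ∈ Icc 1 K, Continuous (ry k)) (hrp_cont : ∀ k ∈ Icc 1 K, Continuous (rp k))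
    (hry : ∀ k, 1 ≤ k → k ≤ K → ∀ φ : Y,
      ry k φ = f φ - a (yN k) φ - (1 / τ) * ⟪ι (yN k - yN (k - 1)), ι φ⟫)
    (hrp : ∀ k, 1 ≤ k → k ≤ K → ∀ φ : Y,
      rp k φ = ⟪zd k - C (yN k), C φ⟫ - a φ (pN k)
        - (1 / τ) * ⟪ι φ, ι (pN k - pN (k + 1))⟫)
    (hru : ∀ ψ ∈ U, ru ψ = ⟪ι ψ, ι (pN 1)⟫ - ⟪ι (uN - ud), ι ψ⟫)
    (Ry Rp c1 c2 : ℝ)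
    (hRy : Ry = timeL2Norm τ K fun k => dualNorm (fun v : Y => ‖v‖) Set.univ (ry k))
    (hRp : Rp = timeL2Norm τ K fun k => dualNorm (fun v : Y => ‖v‖) Set.univ (rp k))
    (hc1 : c1 = (1 / 2) * (dualNorm (fun v : Y => ‖ι v‖) (U : Set Y) ru + (1 / √αLB) * Rp))
    (hc2 : c2 = ((√2 + 1) / αLB) * Ry * Rp + γc ^ 2 / (2 * αLB ^ 2) * Ry ^ 2) :
    ‖ι (u - uN)‖ ≤ c1 + √(c1 ^ 2 + c2) := by
  have he : IsForwardEuler ι a τ K (y - yN) fun k => ry k := hstate.sub_of_residual hτ.ne' hry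
  have hq : IsBackwardEuler ι a τ K (p - pN) fun k φ => rp k φ - ⟪C ((y - yN) k), C φ⟫ := by
    convert hadj.sub_of_residual hτ.ne' hrp using 3 with k φ
    simp only [Pi.sub_apply, map_sub, inner_sub_left]
    ring
  have hqfin : (p - pN) (K + 1) = 0 := by rw [Pi.sub_apply, hpfin, hpNfin, sub_zero]
  have he0 : (y - yN) 0 = u - uN := by rw [Pi.sub_apply, hy0, hyN0]
  have hinit := sq_norm_le_of_optimality hu huN hopt hru
  rw [← he0] at hinit ⊢
  refine (norm_initial_error_le he hq hqfin hτ.le hαLB hcoer hγc hinit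
    (fun k hk => apply_le_dualNorm_mul_norm (hry_cont k hk))
    (fun k hk => apply_le_dualNorm_mul_norm (hrp_cont k hk))).trans ?_
  rw [← hRy, ← hRp, ← hc1, hc2]
  have hRy0 : 0 ≤ Ry := hRy ▸ timeL2Norm_nonneg _
  have hRp0 : 0 ≤ Rp := hRp ▸ timeL2Norm_nonneg _
  gcongr
  · linarith [Real.one_lt_sqrt_two]
  · norm_num

/-- Strong-constraint a posteriori error bound (Proposition 1). -/
theorem strong_constraint_a_posteriori_error_bound
    {H Y D : Type*} [NormedAddCommGroup H] [InnerProductSpace ℝ H]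
    [NormedAddCommGroup Y] [InnerProductSpace ℝ Y] [FiniteDimensional ℝ Y]
    [NormedAddCommGroup D] [InnerProductSpace ℝ D]
    (ι : Y →ₗ[ℝ] H) (hι : Function.Injective ι)
    (U : Submodule ℝ Y)
    (a : Y →ₗ[ℝ] (Y →ₗ[ℝ] ℝ))
    (τ : ℝ) (hτ : 0 < τ) (K : ℕ) (hK : 1 ≤ K)
    (αLB : ℝ) (hαLB : 0 < αLB) (hcoer : ∀ v : Y, αLB * ‖v‖ ^ 2 ≤ a v v)
    (C : Y →ₗ[ℝ] D) (γc : ℝ) (hγc : ∀ v : Y, ‖C v‖ ≤ γc * ‖v‖)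
    (f : Y →ₗ[ℝ] ℝ) (zd : ℕ → D) (ud : Y) (hud : ud ∈ U)
    (y p yN pN : ℕ → Y) (u uN : Y) (hu : u ∈ U) (huN : uN ∈ U)
    (hy0 : y 0 = u)
    (hstate : ∀ k, 1 ≤ k → k ≤ K → ∀ φ : Y,
      ⟪ι (y k - y (k - 1)), ι φ⟫ + τ * a (y k) φ = τ * f φ)
    (hpfin : p (K + 1) = 0)
    (hadj : ∀ k, 1 ≤ k → k ≤ K → ∀ φ : Y,
      ⟪ι φ, ι (p k - p (k + 1))⟫ + τ * a φ (p k) = τ * ⟪zd k - C (y k), C φ⟫)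
    (hopt : ∀ ψ ∈ U, ⟪ι (u - ud), ι ψ⟫ - ⟪ι ψ, ι (p 1)⟫ = 0)
    (hyN0 : yN 0 = uN) (hpNfin : pN (K + 1) = 0)
    (ry rp : ℕ → (Y →ₗ[ℝ] ℝ)) (ru : Y →ₗ[ℝ] ℝ)
    (hry : ∀ k, 1 ≤ k → k ≤ K → ∀ φ : Y,
      ry k φ = f φ - a (yN k) φ - (1 / τ) * ⟪ι (yN k - yN (k - 1)), ι φ⟫)
    (hrp : ∀ k, 1 ≤ k → k ≤ K → ∀ φ : Y,
      rp k φ = ⟪zd k - C (yN k), C φ⟫ - a φ (pN k)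
        - (1 / τ) * ⟪ι φ, ι (pN k - pN (k + 1))⟫)
    (hru : ∀ ψ ∈ U, ru ψ = ⟪ι ψ, ι (pN 1)⟫ - ⟪ι (uN - ud), ι ψ⟫)
    (Ry Rp c1 c2 : ℝ)
    (hRy : Ry = Real.sqrt (τ * ∑ k ∈ Icc 1 K, (dualNorm (fun v : Y => ‖v‖) Set.univ ⇑(ry k)) ^ 2))
    (hRp : Rp = Real.sqrt (τ * ∑ k ∈ Icc 1 K, (dualNorm (fun v : Y => ‖v‖) Set.univ ⇑(rp k)) ^ 2))
    (hc1 : c1 = (1 / 2) * (dualNorm (fun v : Y => ‖ι v‖) (U : Set Y) ⇑ru + (1 / Real.sqrt αLB) * Rp))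
    (hc2 : c2 = ((Real.sqrt 2 + 1) / αLB) * Ry * Rp + γc ^ 2 / (2 * αLB ^ 2) * Ry ^ 2) :
    ‖ι (u - uN)‖ ≤ c1 + Real.sqrt (c1 ^ 2 + c2) :=
  strong_constraint_a_posteriori_error_bound_general ι U a τ hτ K αLB hαLB hcoer C γc hγc f
    zd ud y p yN pN u uN hu huN hy0 hstate hpfin hadj hopt hyN0 hpNfin ry rp ru
    (fun k _ => (ry k).continuous_of_finiteDimensional)
    (fun k _ => (rp k).continuous_of_finiteDimensional) hry hrp hru Ry Rp c1 c2 hRy hRp hc1 hc2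
end

section
/- Weak-constraint a posteriori error bound (Proposition 2). Suppose (y^k)_{k=0..K} ⊂ Y, (p^k)_{k=1..K+1} ⊂ Y and controls u^1,…,u^K ∈ U satisfy the full-order weak-constraint optimality system: y^0 = y_0; m(y^k − y^{k−1}, φ) + τ a(y^k, φ) = τ b(u^k, φ) + τ f(φ) for all φ ∈ Y and k = 1,…,K; p^{K+1} = 0; m(φ, p^k − p^{k+1}) + τ a(φ, p^k) = τ (z_d^k − C y^k, C φ)_D for all φ ∈ Y and k = 1,…,K; and (u^k − u_d^k, ψ)_U − b(ψ, p^k) = 0 for all ψ ∈ U and k = 1,…,K. Let (y_N^k)_{k=0..K} ⊂ Y, (p_N^k)_{k=1..K+1} ⊂ Y and u_N^1,…,u_N^K ∈ U be any candidate with y_N^0 = y_0 and p_N^{K+1} = 0, and define the residuals r̃_y^k(φ) = f(φ) + b(u_N^k, φ) − a(y_N^k, φ) − (1/τ) m(y_N^k − y_N^{k−1}, φ), r̃_p^k(φ) = (z_d^k − C y_N^k, C φ)_D − a(φ, p_N^k) − (1/τ) m(φ, p_N^k − p_N^{k+1}) for φ ∈ Y, r̃_u^k(ψ) = b(ψ,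 p_N^k) − (u_N^k − u_d^k, ψ)_U for ψ ∈ U, and set R̃_y = (τ Σ_{k=1}^K ‖r̃_y^k‖_{Y'}²)^{1/2}, R̃_p = (τ Σ_{k=1}^K ‖r̃_p^k‖_{Y'}²)^{1/2}, R̃_u = (τ Σ_{k=1}^K ‖r̃_u^k‖_{U'}²)^{1/2}. Then (τ Σ_{k=1}^K ‖u^k − u_N^k‖_U²)^{1/2} ≤ c₁ + √(c₁² + c₂), where c₁ = (1/2)(R̃_u + (√2 γ_b / α_LB) R̃_p) and c₂ = (2√2/α_LB) R̃_y R̃_p + (γ_c²/(2 α_LB²)) R̃_y². -/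
set_option autoImplicit false

open Finset RealInnerProductSpace

/-!
The errors `y - y_N`, `p - p_N`, `u - u_N` solve the optimality system with the residuals as
right-hand sides. Testing the state error equation with the adjoint error and the adjoint error
equation with the state error gives the same left-hand side, by summation by parts in time. Together
with the control error equation tested with the control error this leaves
`‖e_u‖² + ‖C e_y‖² = ⟨r_u, e_u⟩ + ⟨r_p, e_y⟩ - ⟨r_y, e_p⟩`.
Energy estimates bound `e_y` by `e_u` and `r_y`, and `e_p` by `C e_y` and `r_p`. The terms in
`‖C e_y‖` are absorbed by completing the square, and a quadratic inequality for `‖e_u‖` remains.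
-/

lemma mul_le_of_mul_sq_le_mul {α X B : ℝ} (hX : 0 ≤ X) (hB : 0 ≤ B) (h : α * X ^ 2 ≤ B * X) :
    α * X ≤ B := by
  rcases hX.eq_or_lt with rfl | hXpos
  · rwa [mul_zero]
  · exact le_of_mul_le_mul_right (by rwa [mul_assoc, ← sq]) hXpos

lemma le_add_sqrt_of_sq_le_s1 {x c₁ c₂ : ℝ} (h : x ^ 2 ≤ 2 * c₁ * x + c₂) :
    x ≤ c₁ + √(c₁ ^ 2 + c₂) := by
  rw [← sub_le_iff_le_add']
  exact Real.le_sqrt_of_sq_le (by linarith [sub_sq x c₁])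

lemma sq_le_of_coupled_bounds {α β γ x X P z Ry Rp Ru : ℝ} (hα : 0 < α)
    (hRy : 0 ≤ Ry) (hRp : 0 ≤ Rp) (hX : α * X ≤ β * x + Ry) (hP : α * P ≤ γ * z + Rp)
    (h : x ^ 2 + z ^ 2 ≤ Ru * x + Rp * X + Ry * P) :
    x ^ 2 ≤ (Ru + β / α * Rp) * x + (2 / α * Ry * Rp + γ ^ 2 / (4 * α ^ 2) * Ry ^ 2) := by
  have state_term : Rp * X ≤ Rp * ((β * x + Ry) / α) :=
    mul_le_mul_of_nonneg_left ((le_div_iff₀' hα).2 hX) hRp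
  have adjoint_term : Ry * P ≤ Ry * ((γ * z + Rp) / α) :=
    mul_le_mul_of_nonneg_left ((le_div_iff₀' hα).2 hP) hRy
  calc x ^ 2
      ≤ Ru * x + Rp * ((β * x + Ry) / α) + Ry * ((γ * z + Rp) / α) - z ^ 2 := by linarith
    _ = (Ru + β / α * Rp) * x + (2 / α * Ry * Rp + γ ^ 2 / (4 * α ^ 2) * Ry ^ 2)
          - (z - γ / (2 * α) * Ry) ^ 2 := by field_simp; ring
    _ ≤ _ := sub_le_self _ (sq_nonneg _)

lemma linear_bound_le_of_one_le {α β γ s x Ry Rp Ru : ℝ} (hα : 0 < α) (hβ : 0 ≤ β) (hs : 1 ≤ s)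
    (hx : 0 ≤ x) (hRy : 0 ≤ Ry) (hRp : 0 ≤ Rp) :
    (Ru + β / α * Rp) * x + (2 / α * Ry * Rp + γ ^ 2 / (4 * α ^ 2) * Ry ^ 2)
      ≤ 2 * (1 / 2 * (Ru + s * β / α * Rp)) * x
        + (2 * s / α * Ry * Rp + s ^ 2 * γ ^ 2 / (4 * α ^ 2) * Ry ^ 2) := by
  have hβs : β ≤ s * β := le_mul_of_one_le_left hβ hs
  have hγs : γ ^ 2 ≤ s ^ 2 * γ ^ 2 := le_mul_of_one_le_left (sq_nonneg γ) (one_le_pow₀ hs)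
  rw [← mul_assoc, mul_one_div_cancel two_ne_zero, one_mul]
  gcongr
  linarith

section DualNorm

variable {H Y : Type*} [NormedAddCommGroup H] [NormedSpace ℝ H]
  [NormedAddCommGroup Y] [NormedSpace ℝ Y] [FiniteDimensional ℝ Y]

lemma exists_forall_apply_le_mul_norm (ι : Y →ₗ[ℝ] H) (hι : Function.Injective ι)
    (r : Y →ₗ[ℝ] ℝ) : ∃ M : ℝ, ∀ v, r v ≤ M * ‖ι v‖ := by
  obtain ⟨c, -, hc⟩ := ι.exists_antilipschitzWith (LinearMap.ker_eq_bot.2 hι)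
  refine ⟨‖r.toContinuousLinearMap‖ * c, fun v => ?_⟩
  calc r v ≤ ‖r.toContinuousLinearMap‖ * ‖v‖ :=
        (le_abs_self _).trans (r.toContinuousLinearMap.le_opNorm v)
    _ ≤ ‖r.toContinuousLinearMap‖ * (c * ‖ι v‖) := by
        gcongr
        exact ZeroHomClass.bound_of_antilipschitz ι hc v
    _ = _ := (mul_assoc _ _ _).symm

lemma apply_le_dualNorm_mul_s1 (ι : Y →ₗ[ℝ] H) (hι : Function.Injective ι) {S : Set Y}
    (r : Y →ₗ[ℝ] ℝ) {v : Y} (hv : v ∈ S) :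
    r v ≤ dualNorm (fun w => ‖ι w‖) S r * ‖ι v‖ := by
  rcases eq_or_ne v 0 with rfl | hv0
  · simp
  have norm_pos (w : Y) (hw : w ≠ 0) : 0 < ‖ι w‖ :=
    norm_pos_iff.2 ((map_ne_zero_iff ι hι).2 hw)
  obtain ⟨M, hM⟩ := exists_forall_apply_le_mul_norm ι hι r
  rw [← div_le_iff₀ (norm_pos v hv0)]
  refine le_csSup ⟨M, ?_⟩ ⟨v, hv, hv0, rfl⟩
  rintro _ ⟨w, -, hw, rfl⟩
  exact (div_le_iff₀ (norm_pos w hw)).2 (hM w)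

end DualNorm

/-- The norm of the discrete space `L²(0, τK)`: time step `τ`, one value in each of the steps
`1, …, K`. -/
noncomputable def timeL2 (τ : ℝ) (K : ℕ) (g : ℕ → ℝ) : ℝ :=
  √(τ * ∑ k ∈ Icc 1 K, g k ^ 2)

section TimeL2

variable {τ : ℝ} {K : ℕ}

lemma timeL2_nonneg (g : ℕ → ℝ) : 0 ≤ timeL2 τ K g :=
  Real.sqrt_nonneg _

lemma sq_timeL2 (hτ : 0 ≤ τ) (g : ℕ → ℝ) : timeL2 τ K g ^ 2 = τ * ∑ k ∈ Icc 1 K, g k ^ 2 :=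
  Real.sq_sqrt (mul_nonneg hτ (sum_nonneg fun _ _ => sq_nonneg _))

lemma timeL2_eq_zero {g : ℕ → ℝ} (hg : ∀ k ∈ Icc 1 K, g k = 0) : timeL2 τ K g = 0 := by
  rw [timeL2, sum_eq_zero fun k hk => by rw [hg k hk, sq, mul_zero], mul_zero, Real.sqrt_zero]

lemma timeL2_const_mul {c : ℝ} (hc : 0 ≤ c) (g : ℕ → ℝ) :
    timeL2 τ K (fun k => c * g k) = c * timeL2 τ K g := by
  simp only [timeL2, mul_pow, ← mul_sum]
  rw [mul_left_comm, Real.sqrt_mul (sq_nonneg c), Real.sqrt_sq hc]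

lemma mul_sum_le_timeL2_mul (hτ : 0 ≤ τ) {F g h : ℕ → ℝ}
    (hF : ∀ k ∈ Icc 1 K, F k ≤ g k * h k) :
    τ * ∑ k ∈ Icc 1 K, F k ≤ timeL2 τ K g * timeL2 τ K h :=
  calc τ * ∑ k ∈ Icc 1 K, F k
      ≤ τ * (√(∑ k ∈ Icc 1 K, g k ^ 2) * √(∑ k ∈ Icc 1 K, h k ^ 2)) :=
        mul_le_mul_of_nonneg_left
          ((sum_le_sum hF).trans (Real.sum_mul_le_sqrt_mul_sqrt _ _ _)) hτ
    _ = timeL2 τ K g * timeL2 τ K h := by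
        rw [timeL2, timeL2, Real.sqrt_mul hτ, Real.sqrt_mul hτ, mul_mul_mul_comm,
          Real.mul_self_sqrt hτ]

lemma mul_sum_le_const_mul_timeL2_mul (hτ : 0 ≤ τ) {c : ℝ} (hc : 0 ≤ c) {F g h : ℕ → ℝ}
    (hF : ∀ k ∈ Icc 1 K, F k ≤ c * g k * h k) :
    τ * ∑ k ∈ Icc 1 K, F k ≤ c * timeL2 τ K g * timeL2 τ K h :=
  timeL2_const_mul (τ := τ) (K := K) hc g ▸ mul_sum_le_timeL2_mul hτ hF

end TimeL2

lemma mul_sq_timeL2_le_of_coercive {Y : Type*} [SeminormedAddCommGroup Y] [NormedSpace ℝ Y]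
    {a : Y →ₗ[ℝ] Y →ₗ[ℝ] ℝ} {α τ : ℝ} (hτ : 0 ≤ τ) (hcoer : ∀ v, α * ‖v‖ ^ 2 ≤ a v v)
    {K : ℕ} (w : ℕ → Y) :
    α * timeL2 τ K (fun k => ‖w k‖) ^ 2 ≤ τ * ∑ k ∈ Icc 1 K, a (w k) (w k) := by
  rw [sq_timeL2 hτ, mul_left_comm, mul_sum]
  exact mul_le_mul_of_nonneg_left (sum_le_sum fun k _ => hcoer (w k)) hτ

section TimeDifferences

variable {H : Type*} [SeminormedAddCommGroup H] [InnerProductSpace ℝ H]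

lemma half_sq_norm_sub_sq_norm_le_inner_sub (x y : H) :
    (‖x‖ ^ 2 - ‖y‖ ^ 2) / 2 ≤ ⟪x - y, x⟫ := by
  rw [inner_sub_left, real_inner_self_eq_norm_sq, real_inner_comm]
  linarith [norm_sub_sq_real x y, sq_nonneg ‖x - y‖]

lemma half_sq_norm_sub_sq_norm_le_sum_inner_sub_pred (e : ℕ → H) (K : ℕ) :
    (‖e K‖ ^ 2 - ‖e 0‖ ^ 2) / 2 ≤ ∑ k ∈ Icc 1 K, ⟪e k - e (k - 1), e k⟫ := by
  induction K with
  | zero => simp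
  | succ n ih =>
    rw [sum_Icc_succ_top n.succ_pos, Nat.add_sub_cancel]
    linarith [half_sq_norm_sub_sq_norm_le_inner_sub (e (n + 1)) (e n)]

lemma half_sq_norm_sub_sq_norm_le_sum_inner_sub_succ (e : ℕ → H) (K : ℕ) :
    (‖e 1‖ ^ 2 - ‖e (K + 1)‖ ^ 2) / 2 ≤ ∑ k ∈ Icc 1 K, ⟪e k, e k - e (k + 1)⟫ := by
  induction K with
  | zero => simp
  | succ n ih =>
    rw [sum_Icc_succ_top n.succ_pos, real_inner_comm]
    linarith [half_sq_norm_sub_sq_norm_le_inner_sub (e (n + 1)) (e (n + 1 + 1))]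

lemma sum_inner_sub_pred_eq_sum_inner_sub_succ (e q : ℕ → H) (K : ℕ) :
    ∑ k ∈ Icc 1 K, ⟪e k - e (k - 1), q k⟫
      = ∑ k ∈ Icc 1 K, ⟪e k, q k - q (k + 1)⟫ + ⟪e K, q (K + 1)⟫ - ⟪e 0, q 1⟫ := by
  induction K with
  | zero => simp
  | succ n ih =>
    rw [sum_Icc_succ_top n.succ_pos, sum_Icc_succ_top n.succ_pos, ih, Nat.add_sub_cancel,
      inner_sub_left, inner_sub_right]
    ring

end TimeDifferences

/-- The equations satisfied by the errors `y`, `p`, `u` in state, adjoint and control of an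
approximate solution of the weak-constraint optimality system. The residuals `ry`, `rp`, `ru` are
the right-hand sides. The maps `ι` and `κ` carry the inner products `⟪ι v, ι w⟫` on states and
`⟪κ v, κ w⟫` on controls, and `U` is the space of admissible controls. -/
structure ErrorSystem {H G Y V D : Type*}
    [SeminormedAddCommGroup H] [InnerProductSpace ℝ H]
    [SeminormedAddCommGroup G] [InnerProductSpace ℝ G]
    [AddCommGroup Y] [Module ℝ Y] [AddCommGroup V] [Module ℝ V]
    [SeminormedAddCommGroup D] [InnerProductSpace ℝ D]
    (ι : Y →ₗ[ℝ] H) (κ : V →ₗ[ℝ] G) (U : Submodule ℝ V) (a : Y →ₗ[ℝ] Y →ₗ[ℝ] ℝ)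
    (τ : ℝ) (K : ℕ) (C : Y →ₗ[ℝ] D) (b : V →ₗ[ℝ] Y →ₗ[ℝ] ℝ)
    (ry rp : ℕ → Y →ₗ[ℝ] ℝ) (ru : ℕ → V →ₗ[ℝ] ℝ)
    (y p : ℕ → Y) (u : ℕ → V) : Prop where
  initial : y 0 = 0
  terminal : p (K + 1) = 0
  control_mem : ∀ k ∈ Icc 1 K, u k ∈ U
  state : ∀ k ∈ Icc 1 K, ∀ φ,
    ⟪ι (y k - y (k - 1)), ι φ⟫ + τ * a (y k) φ = τ * (b (u k) φ + ry k φ)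
  adjoint : ∀ k ∈ Icc 1 K, ∀ φ,
    ⟪ι φ, ι (p k - p (k + 1))⟫ + τ * a φ (p k) = τ * (rp k φ - ⟪C (y k), C φ⟫)
  control : ∀ k ∈ Icc 1 K, ∀ ψ ∈ U, ⟪κ (u k), κ ψ⟫ - b ψ (p k) = ru k ψ

namespace ErrorSystem

section Algebra

variable {H G Y V D : Type*} [SeminormedAddCommGroup H] [InnerProductSpace ℝ H]
  [SeminormedAddCommGroup G] [InnerProductSpace ℝ G]
  [AddCommGroup Y] [Module ℝ Y] [AddCommGroup V] [Module ℝ V]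
  [SeminormedAddCommGroup D] [InnerProductSpace ℝ D]
  {ι : Y →ₗ[ℝ] H} {κ : V →ₗ[ℝ] G} {U : Submodule ℝ V} {a : Y →ₗ[ℝ] Y →ₗ[ℝ] ℝ}
  {τ : ℝ} {K : ℕ} {C : Y →ₗ[ℝ] D} {b : V →ₗ[ℝ] Y →ₗ[ℝ] ℝ}
  {ry rp : ℕ → Y →ₗ[ℝ] ℝ} {ru : ℕ → V →ₗ[ℝ] ℝ} {y p : ℕ → Y} {u : ℕ → V}

lemma sum_state (h : ErrorSystem ι κ U a τ K C b ry rp ru y p u) (w : ℕ → Y) :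
    ∑ k ∈ Icc 1 K, ⟪ι (y k) - ι (y (k - 1)), ι (w k)⟫ + τ * ∑ k ∈ Icc 1 K, a (y k) (w k)
      = τ * ∑ k ∈ Icc 1 K, b (u k) (w k) + τ * ∑ k ∈ Icc 1 K, ry k (w k) := by
  simp only [mul_sum, ← sum_add_distrib, ← mul_add, ← map_sub]
  exact sum_congr rfl fun k hk => h.state k hk (w k)

lemma sum_adjoint (h : ErrorSystem ι κ U a τ K C b ry rp ru y p u) (w : ℕ → Y) :
    ∑ k ∈ Icc 1 K, ⟪ι (w k), ι (p k) - ι (p (k + 1))⟫ + τ * ∑ k ∈ Icc 1 K, a (w k) (p k)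
      = τ * ∑ k ∈ Icc 1 K, rp k (w k) - τ * ∑ k ∈ Icc 1 K, ⟪C (y k), C (w k)⟫ := by
  simp only [mul_sum, ← sum_add_distrib, ← sum_sub_distrib, ← mul_sub, ← map_sub]
  exact sum_congr rfl fun k hk => h.adjoint k hk (w k)

lemma sq_control (h : ErrorSystem ι κ U a τ K C b ry rp ru y p u) (hτ : 0 ≤ τ) :
    timeL2 τ K (fun k => ‖κ (u k)‖) ^ 2
      = τ * ∑ k ∈ Icc 1 K, b (u k) (p k) + τ * ∑ k ∈ Icc 1 K, ru k (u k) := by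
  rw [sq_timeL2 hτ, ← mul_add, ← sum_add_distrib]
  refine congrArg (τ * ·) (sum_congr rfl fun k hk => ?_)
  rw [← h.control k hk _ (h.control_mem k hk), real_inner_self_eq_norm_sq, add_sub_cancel]

lemma sq_control_add_sq_observation (h : ErrorSystem ι κ U a τ K C b ry rp ru y p u)
    (hτ : 0 ≤ τ) :
    timeL2 τ K (fun k => ‖κ (u k)‖) ^ 2 + timeL2 τ K (fun k => ‖C (y k)‖) ^ 2
      = τ * ∑ k ∈ Icc 1 K, ru k (u k) + τ * ∑ k ∈ Icc 1 K, rp k (y k)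
        - τ * ∑ k ∈ Icc 1 K, ry k (p k) := by
  have summation_by_parts :=
    sum_inner_sub_pred_eq_sum_inner_sub_succ (fun k => ι (y k)) (fun k => ι (p k)) K
  have adjoint_tested := h.sum_adjoint y
  simp only [h.initial, h.terminal, map_zero, inner_zero_left, inner_zero_right]
    at summation_by_parts
  simp only [real_inner_self_eq_norm_sq] at adjoint_tested
  rw [h.sq_control hτ, sq_timeL2 hτ]
  linarith [h.sum_state p]

lemma of_residuals {f : Y →ₗ[ℝ] ℝ} {zd : ℕ → D} {y₀ : Y} {ud : ℕ → V} {y p yN pN : ℕ → Y}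
    {u uN : ℕ → V} (hτ : τ ≠ 0)
    (hu : ∀ k, 1 ≤ k → k ≤ K → u k ∈ U) (huN : ∀ k, 1 ≤ k → k ≤ K → uN k ∈ U)
    (hy0 : y 0 = y₀)
    (hstate : ∀ k, 1 ≤ k → k ≤ K → ∀ φ,
      ⟪ι (y k - y (k - 1)), ι φ⟫ + τ * a (y k) φ = τ * b (u k) φ + τ * f φ)
    (hpfin : p (K + 1) = 0)
    (hadj : ∀ k, 1 ≤ k → k ≤ K → ∀ φ,
      ⟪ι φ, ι (p k - p (k + 1))⟫ + τ * a φ (p k) = τ * ⟪zd k - C (y k), C φ⟫)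
    (hopt : ∀ k, 1 ≤ k → k ≤ K → ∀ ψ ∈ U, ⟪κ (u k - ud k), κ ψ⟫ - b ψ (p k) = 0)
    (hyN0 : yN 0 = y₀) (hpNfin : pN (K + 1) = 0)
    (hry : ∀ k, 1 ≤ k → k ≤ K → ∀ φ,
      ry k φ = f φ + b (uN k) φ - a (yN k) φ - (1 / τ) * ⟪ι (yN k - yN (k - 1)), ι φ⟫)
    (hrp : ∀ k, 1 ≤ k → k ≤ K → ∀ φ,
      rp k φ = ⟪zd k - C (yN k), C φ⟫ - a φ (pN k) - (1 / τ) * ⟪ι φ, ι (pN k - pN (k + 1))⟫)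
    (hru : ∀ k, 1 ≤ k → k ≤ K → ∀ ψ ∈ U, ru k ψ = b ψ (pN k) - ⟪κ (uN k - ud k), κ ψ⟫) :
    ErrorSystem ι κ U a τ K C b ry rp ru (y - yN) (p - pN) (u - uN) where
  initial := by rw [Pi.sub_apply, hy0, hyN0, sub_self]
  terminal := by rw [Pi.sub_apply, hpfin, hpNfin, sub_self]
  control_mem k hk :=
    have ⟨h1, hK⟩ := mem_Icc.1 hk
    U.sub_mem (hu k h1 hK) (huN k h1 hK)
  state k hk φ := by
    obtain ⟨h1, hK⟩ := mem_Icc.1 hk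
    have exact_eq := hstate k h1 hK φ
    rw [hry k h1 hK φ]
    simp only [Pi.sub_apply, map_sub, LinearMap.sub_apply, inner_sub_left] at exact_eq ⊢
    field_simp
    linarith
  adjoint k hk φ := by
    obtain ⟨h1, hK⟩ := mem_Icc.1 hk
    have exact_eq := hadj k h1 hK φ
    rw [hrp k h1 hK φ]
    simp only [Pi.sub_apply, map_sub, inner_sub_left, inner_sub_right] at exact_eq ⊢
    field_simp
    linarith
  control k hk ψ hψ := by
    obtain ⟨h1, hK⟩ := mem_Icc.1 hk
    have exact_eq := hopt k h1 hK ψ hψ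
    rw [hru k h1 hK ψ hψ]
    simp only [Pi.sub_apply, map_sub, inner_sub_left] at exact_eq ⊢
    linarith

end Algebra

section Estimates

variable {H G Y V D : Type*} [SeminormedAddCommGroup H] [InnerProductSpace ℝ H]
  [SeminormedAddCommGroup G] [InnerProductSpace ℝ G]
  [SeminormedAddCommGroup Y] [NormedSpace ℝ Y] [AddCommGroup V] [Module ℝ V]
  [SeminormedAddCommGroup D] [InnerProductSpace ℝ D]
  {ι : Y →ₗ[ℝ] H} {κ : V →ₗ[ℝ] G} {U : Submodule ℝ V} {a : Y →ₗ[ℝ] Y →ₗ[ℝ] ℝ}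
  {τ : ℝ} {K : ℕ} {C : Y →ₗ[ℝ] D} {b : V →ₗ[ℝ] Y →ₗ[ℝ] ℝ}
  {ry rp : ℕ → Y →ₗ[ℝ] ℝ} {ru : ℕ → V →ₗ[ℝ] ℝ} {y p : ℕ → Y} {u : ℕ → V}
  {α γb γc : ℝ} {δy δp δu : ℕ → ℝ}

lemma state_le (h : ErrorSystem ι κ U a τ K C b ry rp ru y p u) (hτ : 0 ≤ τ)
    (hcoer : ∀ v, α * ‖v‖ ^ 2 ≤ a v v) (hγb₀ : 0 ≤ γb)
    (hγb : ∀ w ∈ U, ∀ v, |b w v| ≤ γb * ‖κ w‖ * ‖v‖)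
    (hδy : ∀ k ∈ Icc 1 K, ∀ v, ry k v ≤ δy k * ‖v‖) :
    α * timeL2 τ K (fun k => ‖y k‖)
      ≤ γb * timeL2 τ K (fun k => ‖κ (u k)‖) + timeL2 τ K δy := by
  refine mul_le_of_mul_sq_le_mul (timeL2_nonneg _)
    (add_nonneg (mul_nonneg hγb₀ (timeL2_nonneg _)) (timeL2_nonneg _)) ?_
  have energy := half_sq_norm_sub_sq_norm_le_sum_inner_sub_pred (fun k => ι (y k)) K
  simp only [h.initial, map_zero, norm_zero] at energy
  have control_term : τ * ∑ k ∈ Icc 1 K, b (u k) (y k)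
      ≤ γb * timeL2 τ K (fun k => ‖κ (u k)‖) * timeL2 τ K (fun k => ‖y k‖) :=
    mul_sum_le_const_mul_timeL2_mul hτ hγb₀ fun k hk =>
      (le_abs_self _).trans (hγb _ (h.control_mem k hk) _)
  have residual_term : τ * ∑ k ∈ Icc 1 K, ry k (y k)
      ≤ timeL2 τ K δy * timeL2 τ K (fun k => ‖y k‖) :=
    mul_sum_le_timeL2_mul hτ fun k hk => hδy k hk _
  linarith [mul_sq_timeL2_le_of_coercive hτ hcoer (K := K) y, h.sum_state y,
    sq_nonneg ‖ι (y K)‖]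

lemma adjoint_le (h : ErrorSystem ι κ U a τ K C b ry rp ru y p u) (hτ : 0 ≤ τ)
    (hcoer : ∀ v, α * ‖v‖ ^ 2 ≤ a v v) (hγc₀ : 0 ≤ γc) (hγc : ∀ v, ‖C v‖ ≤ γc * ‖v‖)
    (hδp : ∀ k ∈ Icc 1 K, ∀ v, rp k v ≤ δp k * ‖v‖) :
    α * timeL2 τ K (fun k => ‖p k‖)
      ≤ γc * timeL2 τ K (fun k => ‖C (y k)‖) + timeL2 τ K δp := by
  refine mul_le_of_mul_sq_le_mul (timeL2_nonneg _)
    (add_nonneg (mul_nonneg hγc₀ (timeL2_nonneg _)) (timeL2_nonneg _)) ?_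
  have energy := half_sq_norm_sub_sq_norm_le_sum_inner_sub_succ (fun k => ι (p k)) K
  simp only [h.terminal, map_zero, norm_zero] at energy
  have observation_term : τ * ∑ k ∈ Icc 1 K, -⟪C (y k), C (p k)⟫
      ≤ γc * timeL2 τ K (fun k => ‖C (y k)‖) * timeL2 τ K (fun k => ‖p k‖) :=
    mul_sum_le_const_mul_timeL2_mul hτ hγc₀ fun k _ =>
      calc -⟪C (y k), C (p k)⟫ ≤ ‖C (y k)‖ * ‖C (p k)‖ :=
            (neg_le_abs _).trans (abs_real_inner_le_norm _ _)
        _ ≤ ‖C (y k)‖ * (γc * ‖p k‖) := by gcongr; exact hγc _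
        _ = γc * ‖C (y k)‖ * ‖p k‖ := by ring
  have residual_term : τ * ∑ k ∈ Icc 1 K, rp k (p k)
      ≤ timeL2 τ K δp * timeL2 τ K (fun k => ‖p k‖) :=
    mul_sum_le_timeL2_mul hτ fun k hk => hδp k hk _
  rw [sum_neg_distrib] at observation_term
  linarith [mul_sq_timeL2_le_of_coercive hτ hcoer (K := K) p, h.sum_adjoint p,
    sq_nonneg ‖ι (p 1)‖]

lemma sq_control_add_sq_observation_le (h : ErrorSystem ι κ U a τ K C b ry rp ru y p u)
    (hτ : 0 ≤ τ) (hδy : ∀ k ∈ Icc 1 K, ∀ v, ry k v ≤ δy k * ‖v‖)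
    (hδp : ∀ k ∈ Icc 1 K, ∀ v, rp k v ≤ δp k * ‖v‖)
    (hδu : ∀ k ∈ Icc 1 K, ∀ w ∈ U, ru k w ≤ δu k * ‖κ w‖) :
    timeL2 τ K (fun k => ‖κ (u k)‖) ^ 2 + timeL2 τ K (fun k => ‖C (y k)‖) ^ 2
      ≤ timeL2 τ K δu * timeL2 τ K (fun k => ‖κ (u k)‖)
        + timeL2 τ K δp * timeL2 τ K (fun k => ‖y k‖)
        + timeL2 τ K δy * timeL2 τ K (fun k => ‖p k‖) := by
  have control_term : τ * ∑ k ∈ Icc 1 K, ru k (u k)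
      ≤ timeL2 τ K δu * timeL2 τ K (fun k => ‖κ (u k)‖) :=
    mul_sum_le_timeL2_mul hτ fun k hk => hδu k hk _ (h.control_mem k hk)
  have adjoint_term : τ * ∑ k ∈ Icc 1 K, rp k (y k)
      ≤ timeL2 τ K δp * timeL2 τ K (fun k => ‖y k‖) :=
    mul_sum_le_timeL2_mul hτ fun k hk => hδp k hk _
  have state_term : τ * ∑ k ∈ Icc 1 K, -ry k (p k)
      ≤ timeL2 τ K δy * timeL2 τ K (fun k => ‖p k‖) :=
    mul_sum_le_timeL2_mul hτ fun k hk => by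
      simpa only [map_neg, norm_neg] using hδy k hk (-p k)
  rw [sum_neg_distrib] at state_term
  linarith [h.sq_control_add_sq_observation hτ]

theorem sq_control_le (h : ErrorSystem ι κ U a τ K C b ry rp ru y p u) (hτ : 0 ≤ τ)
    (hα : 0 < α) (hcoer : ∀ v, α * ‖v‖ ^ 2 ≤ a v v) (hγc : ∀ v, ‖C v‖ ≤ γc * ‖v‖)
    (hγb₀ : 0 ≤ γb) (hγb : ∀ w ∈ U, ∀ v, |b w v| ≤ γb * ‖κ w‖ * ‖v‖)
    (hδy : ∀ k ∈ Icc 1 K, ∀ v, ry k v ≤ δy k * ‖v‖)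
    (hδp : ∀ k ∈ Icc 1 K, ∀ v, rp k v ≤ δp k * ‖v‖)
    (hδu : ∀ k ∈ Icc 1 K, ∀ w ∈ U, ru k w ≤ δu k * ‖κ w‖) :
    timeL2 τ K (fun k => ‖κ (u k)‖) ^ 2
      ≤ (timeL2 τ K δu + γb / α * timeL2 τ K δp) * timeL2 τ K (fun k => ‖κ (u k)‖)
        + (2 / α * timeL2 τ K δy * timeL2 τ K δp
          + γc ^ 2 / (4 * α ^ 2) * timeL2 τ K δy ^ 2) := by
  have hγc' (v : Y) : ‖C v‖ ≤ |γc| * ‖v‖ :=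
    (hγc v).trans (mul_le_mul_of_nonneg_right (le_abs_self γc) (norm_nonneg v))
  rw [← sq_abs γc]
  exact sq_le_of_coupled_bounds hα (timeL2_nonneg _) (timeL2_nonneg _)
    (h.state_le hτ hcoer hγb₀ hγb hδy) (h.adjoint_le hτ hcoer (abs_nonneg γc) hγc' hδp)
    (h.sq_control_add_sq_observation_le hτ hδy hδp hδu)

end Estimates

end ErrorSystem

lemma nonneg_or_norm_eq_zero_of_abs_le {H Y : Type*} [SeminormedAddCommGroup H] [Module ℝ H]
    [NormedAddCommGroup Y] [Module ℝ Y] {ι : Y →ₗ[ℝ] H} {U : Submodule ℝ Y}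
    {b : Y →ₗ[ℝ] Y →ₗ[ℝ] ℝ} {γ : ℝ} (hγ : ∀ w ∈ U, ∀ v, |b w v| ≤ γ * ‖ι w‖ * ‖v‖) :
    0 ≤ γ ∨ ∀ w ∈ U, ‖ι w‖ = 0 := by
  rcases subsingleton_or_nontrivial Y with _ | _
  · exact .inr fun w _ => by rw [Subsingleton.elim w 0, map_zero, norm_zero]
  obtain ⟨v, hv⟩ := exists_ne (0 : Y)
  refine or_iff_not_imp_left.2 fun hneg w hw => ?_
  have hprod : 0 ≤ γ * ‖ι w‖ :=
    nonneg_of_mul_nonneg_left ((abs_nonneg _).trans (hγ w hw v)) (norm_pos_iff.2 hv)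
  by_contra hne
  exact hneg (nonneg_of_mul_nonneg_left hprod ((norm_nonneg _).lt_of_ne' hne))

/- `s = 1` is the sharpest choice, `s = √2` gives the constants of the paper. -/
theorem weak_constraint_a_posteriori_error_bound_general
    {H Y D : Type*} [SeminormedAddCommGroup H] [InnerProductSpace ℝ H]
    [NormedAddCommGroup Y] [NormedSpace ℝ Y]
    [SeminormedAddCommGroup D] [InnerProductSpace ℝ D]
    (ι : Y →ₗ[ℝ] H) (U : Submodule ℝ Y) (a : Y →ₗ[ℝ] Y →ₗ[ℝ] ℝ)
    (τ : ℝ) (hτ : 0 < τ) (K : ℕ)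
    (αLB : ℝ) (hαLB : 0 < αLB) (hcoer : ∀ v, αLB * ‖v‖ ^ 2 ≤ a v v)
    (C : Y →ₗ[ℝ] D) (γc : ℝ) (hγc : ∀ v, ‖C v‖ ≤ γc * ‖v‖)
    (b : Y →ₗ[ℝ] Y →ₗ[ℝ] ℝ) (γb : ℝ)
    (hγb : ∀ w ∈ U, ∀ v, |b w v| ≤ γb * ‖ι w‖ * ‖v‖)
    (f : Y →ₗ[ℝ] ℝ) (zd : ℕ → D) (y0 : Y) (ud : ℕ → Y)
    (y p yN pN u uN : ℕ → Y)
    (hu : ∀ k, 1 ≤ k → k ≤ K → u k ∈ U) (huN : ∀ k, 1 ≤ k → k ≤ K → uN k ∈ U)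
    (hy0 : y 0 = y0)
    (hstate : ∀ k, 1 ≤ k → k ≤ K → ∀ φ,
      ⟪ι (y k - y (k - 1)), ι φ⟫ + τ * a (y k) φ = τ * b (u k) φ + τ * f φ)
    (hpfin : p (K + 1) = 0)
    (hadj : ∀ k, 1 ≤ k → k ≤ K → ∀ φ,
      ⟪ι φ, ι (p k - p (k + 1))⟫ + τ * a φ (p k) = τ * ⟪zd k - C (y k), C φ⟫)
    (hopt : ∀ k, 1 ≤ k → k ≤ K → ∀ ψ ∈ U, ⟪ι (u k - ud k), ι ψ⟫ - b ψ (p k) = 0)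
    (hyN0 : yN 0 = y0) (hpNfin : pN (K + 1) = 0)
    (ry rp ru : ℕ → Y →ₗ[ℝ] ℝ)
    (hry : ∀ k, 1 ≤ k → k ≤ K → ∀ φ,
      ry k φ = f φ + b (uN k) φ - a (yN k) φ - (1 / τ) * ⟪ι (yN k - yN (k - 1)), ι φ⟫)
    (hrp : ∀ k, 1 ≤ k → k ≤ K → ∀ φ,
      rp k φ = ⟪zd k - C (yN k), C φ⟫ - a φ (pN k) - (1 / τ) * ⟪ι φ, ι (pN k - pN (k + 1))⟫)
    (hru : ∀ k, 1 ≤ k → k ≤ K → ∀ ψ ∈ U, ru k ψ = b ψ (pN k) - ⟪ι (uN k - ud k), ι ψ⟫)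
    (δy δp δu : ℕ → ℝ)
    (hδy : ∀ k ∈ Icc 1 K, ∀ v, ry k v ≤ δy k * ‖v‖)
    (hδp : ∀ k ∈ Icc 1 K, ∀ v, rp k v ≤ δp k * ‖v‖)
    (hδu : ∀ k ∈ Icc 1 K, ∀ w ∈ U, ru k w ≤ δu k * ‖ι w‖)
    (s Ry Rp Ru c1 c2 : ℝ) (hs : 1 ≤ s)
    (hRy : Ry = timeL2 τ K δy) (hRp : Rp = timeL2 τ K δp) (hRu : Ru = timeL2 τ K δu)
    (hc1 : c1 = 1 / 2 * (Ru + s * γb / αLB * Rp))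
    (hc2 : c2 = 2 * s / αLB * Ry * Rp + s ^ 2 * γc ^ 2 / (4 * αLB ^ 2) * Ry ^ 2) :
    timeL2 τ K (fun k => ‖ι (u k - uN k)‖) ≤ c1 + √(c1 ^ 2 + c2) := by
  have hRy0 : 0 ≤ Ry := hRy ▸ timeL2_nonneg δy
  have hRp0 : 0 ≤ Rp := hRp ▸ timeL2_nonneg δp
  have errors : ErrorSystem ι ι U a τ K C b ry rp ru (y - yN) (p - pN) (u - uN) :=
    .of_residuals hτ.ne' hu huN hy0 hstate hpfin hadj hopt hyN0 hpNfin hry hrp hru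
  apply le_add_sqrt_of_sq_le_s1
  rw [hc1, hc2]
  rcases nonneg_or_norm_eq_zero_of_abs_le hγb with hγb0 | hU
  · have sharp := errors.sq_control_le hτ.le hαLB hcoer hγc hγb0 hγb hδy hδp hδu
    rw [← hRy, ← hRp, ← hRu] at sharp
    exact sharp.trans (linear_bound_le_of_one_le hαLB hγb0 hs (timeL2_nonneg _) hRy0 hRp0)
  · have control_error_zero : timeL2 τ K (fun k => ‖ι (u k - uN k)‖) = 0 :=
      timeL2_eq_zero fun k hk => hU _ (errors.control_mem k hk)
    rw [control_error_zero, zero_pow two_ne_zero, mul_zero, zero_add]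
    positivity

/-- Weak-constraint a posteriori error bound (Proposition 2). -/
theorem weak_constraint_a_posteriori_error_bound
    {H Y D : Type*} [NormedAddCommGroup H] [InnerProductSpace ℝ H]
    [NormedAddCommGroup Y] [InnerProductSpace ℝ Y] [FiniteDimensional ℝ Y]
    [NormedAddCommGroup D] [InnerProductSpace ℝ D]
    (ι : Y →ₗ[ℝ] H) (hι : Function.Injective ι)
    (U : Submodule ℝ Y)
    (a : Y →ₗ[ℝ] (Y →ₗ[ℝ] ℝ))
    (τ : ℝ) (hτ : 0 < τ) (K : ℕ) (hK : 1 ≤ K)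
    (αLB : ℝ) (hαLB : 0 < αLB) (hcoer : ∀ v : Y, αLB * ‖v‖ ^ 2 ≤ a v v)
    (C : Y →ₗ[ℝ] D) (γc : ℝ) (hγc : ∀ v : Y, ‖C v‖ ≤ γc * ‖v‖)
    (b : Y →ₗ[ℝ] (Y →ₗ[ℝ] ℝ)) (γb : ℝ)
    (hγb : ∀ w ∈ U, ∀ v : Y, |b w v| ≤ γb * ‖ι w‖ * ‖v‖)
    (f : Y →ₗ[ℝ] ℝ) (zd : ℕ → D) (y0 : Y) (ud : ℕ → Y)
    (hud : ∀ k, 1 ≤ k → k ≤ K → ud k ∈ U)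
    (y p yN pN : ℕ → Y) (u uN : ℕ → Y)
    (hu : ∀ k, 1 ≤ k → k ≤ K → u k ∈ U) (huN : ∀ k, 1 ≤ k → k ≤ K → uN k ∈ U)
    (hy0 : y 0 = y0)
    (hstate : ∀ k, 1 ≤ k → k ≤ K → ∀ φ : Y,
      ⟪ι (y k - y (k - 1)), ι φ⟫ + τ * a (y k) φ = τ * b (u k) φ + τ * f φ)
    (hpfin : p (K + 1) = 0)
    (hadj : ∀ k, 1 ≤ k → k ≤ K → ∀ φ : Y,
      ⟪ι φ, ι (p k - p (k + 1))⟫ + τ * a φ (p k) = τ * ⟪zd k - C (y k), C φ⟫)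
    (hopt : ∀ k, 1 ≤ k → k ≤ K → ∀ ψ ∈ U,
      ⟪ι (u k - ud k), ι ψ⟫ - b ψ (p k) = 0)
    (hyN0 : yN 0 = y0) (hpNfin : pN (K + 1) = 0)
    (ry rp ru : ℕ → (Y →ₗ[ℝ] ℝ))
    (hry : ∀ k, 1 ≤ k → k ≤ K → ∀ φ : Y,
      ry k φ = f φ + b (uN k) φ - a (yN k) φ
        - (1 / τ) * ⟪ι (yN k - yN (k - 1)), ι φ⟫)
    (hrp : ∀ k, 1 ≤ k → k ≤ K → ∀ φ : Y,
      rp k φ = ⟪zd k - C (yN k), C φ⟫ - a φ (pN k)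
        - (1 / τ) * ⟪ι φ, ι (pN k - pN (k + 1))⟫)
    (hru : ∀ k, 1 ≤ k → k ≤ K → ∀ ψ ∈ U,
      ru k ψ = b ψ (pN k) - ⟪ι (uN k - ud k), ι ψ⟫)
    (Ry Rp Ru c1 c2 : ℝ)
    (hRy : Ry = Real.sqrt (τ * ∑ k ∈ Icc 1 K, (dualNorm (fun v : Y => ‖v‖) Set.univ ⇑(ry k)) ^ 2))
    (hRp : Rp = Real.sqrt (τ * ∑ k ∈ Icc 1 K, (dualNorm (fun v : Y => ‖v‖) Set.univ ⇑(rp k)) ^ 2))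
    (hRu : Ru = Real.sqrt (τ * ∑ k ∈ Icc 1 K, (dualNorm (fun v : Y => ‖ι v‖) (U : Set Y) ⇑(ru k)) ^ 2))
    (hc1 : c1 = (1 / 2) * (Ru + Real.sqrt 2 * γb / αLB * Rp))
    (hc2 : c2 = (2 * Real.sqrt 2 / αLB) * Ry * Rp + γc ^ 2 / (2 * αLB ^ 2) * Ry ^ 2) :
    Real.sqrt (τ * ∑ k ∈ Icc 1 K, ‖ι (u k - uN k)‖ ^ 2)
      ≤ c1 + Real.sqrt (c1 ^ 2 + c2) := by
  refine weak_constraint_a_posteriori_error_bound_general ι U a τ hτ K αLB hαLB hcoer C γc hγc b γb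
    hγb f zd y0 ud y p yN pN u uN hu huN hy0 hstate hpfin hadj hopt hyN0 hpNfin ry rp ru hry hrp hru
    _ _ _ (fun k _ v => apply_le_dualNorm_mul_s1 .id Function.injective_id (ry k) (Set.mem_univ v))
    (fun k _ v => apply_le_dualNorm_mul_s1 .id Function.injective_id (rp k) (Set.mem_univ v))
    (fun k _ w hw => apply_le_dualNorm_mul_s1 ι hι (ru k) hw)
    √2 Ry Rp Ru c1 c2 (Real.one_le_sqrt.2 one_le_two) hRy hRp hRu hc1 ?_
  rw [hc2, Real.sq_sqrt zero_le_two]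
  ring
end

section
/- Strong-constraint error-residual duality identity. Suppose e_y^0,…,e_y^K ∈ Y, e_p^1,…,e_p^{K+1} ∈ Y and e_u ∈ U, together with linear functionals r_y^1,…,r_y^K and r_p^1,…,r_p^K on Y and r_u on U, satisfy: (i) m(e_y^k − e_y^{k−1}, φ) + τ a(e_y^k, φ) = τ r_y^k(φ) for all φ ∈ Y and k = 1,…,K; (ii) m(φ, e_p^k − e_p^{k+1}) + τ a(φ, e_p^k) = τ r_p^k(φ) − τ (C e_y^k, C φ)_D for all φ ∈ Y and k = 1,…,K; (iii) (e_u, ψ)_U − m(ψ, e_p^1) = r_u(ψ) for all ψ ∈ U; with e_p^{K+1} = 0 and e_y^0 = e_u. Then ‖e_u‖_U² + τ Σ_{k=1}^K ‖C e_y^k‖_D² = −τ Σ_{k=1}^K r_y^k(e_p^k) + τ Σ_{k=1}^K r_p^k(e_y^k) + r_u(e_u). -/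
set_option autoImplicit false

open Finset RealInnerProductSpace

/-!
Test the state equation at step `k` with `p k` and the adjoint equation at step `k` with `y k`.
In the difference the form `a` cancels, and what is left of `m` is
`m (y k) (p (k + 1)) - m (y (k - 1)) (p k)`, which telescopes in `k`. The boundary term at the final
time vanishes with the adjoint, and the one at the initial time is given by the optimality condition
tested with the initial state.
-/

section SummationByParts

variable {R Y P G : Type*} [CommSemiring R] [AddCommGroup Y] [Module R Y] [AddCommGroup P]
  [Module R P] [AddCommGroup G] [Module R G]

theorem sum_Icc_bilin_by_parts (m : Y →ₗ[R] P →ₗ[R] G) (y : ℕ → Y) (p : ℕ → P) (K : ℕ) :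
    ∑ k ∈ Icc 1 K, (m (y k - y (k - 1)) (p k) - m (y k) (p k - p (k + 1)))
      = m (y K) (p (K + 1)) - m (y 0) (p 1) := by
  induction K with
  | zero => simp
  | succ K ih =>
    rw [sum_Icc_succ_top (Nat.le_add_left 1 K), ih, Nat.add_sub_cancel]
    simp only [map_sub, LinearMap.sub_apply]
    abel

end SummationByParts

section BilinearForms

variable {R Y P : Type*} [CommRing R] [AddCommGroup Y] [Module R Y] [AddCommGroup P] [Module R P]
variable (m a : Y →ₗ[R] P →ₗ[R] R) (c : Y →ₗ[R] Y →ₗ[R] R) (τ : R) (K : ℕ)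
  (y : ℕ → Y) (p : ℕ → P) (ry : ℕ → P →ₗ[R] R) (rp : ℕ → Y →ₗ[R] R)

theorem state_adjoint_residual_duality
    (hstate : ∀ k, 1 ≤ k → k ≤ K → ∀ φ : P,
      m (y k - y (k - 1)) φ + τ * a (y k) φ = τ * ry k φ)
    (hadj : ∀ k, 1 ≤ k → k ≤ K → ∀ φ : Y,
      m φ (p k - p (k + 1)) + τ * a φ (p k) = τ * rp k φ - τ * c (y k) φ) :
    m (y 0) (p 1) + τ * ∑ k ∈ Icc 1 K, c (y k) (y k)
      = -(τ * ∑ k ∈ Icc 1 K, ry k (p k)) + τ * ∑ k ∈ Icc 1 K, rp k (y k)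
        + m (y K) (p (K + 1)) := by
  have hstep : ∀ k ∈ Icc 1 K,
      m (y k - y (k - 1)) (p k) - m (y k) (p k - p (k + 1))
        = τ * (ry k (p k) - rp k (y k) + c (y k) (y k)) := by
    intro k hk
    obtain ⟨h1k, hkK⟩ := mem_Icc.mp hk
    linear_combination hstate k h1k hkK (p k) - hadj k h1k hkK (y k)
  have hsum := sum_Icc_bilin_by_parts m y p K
  rw [sum_congr rfl hstep, ← mul_sum, sum_add_distrib, sum_sub_distrib] at hsum
  linear_combination hsum

/-- Petrov–Galerkin form over a commutative ring, with separate trial space `Y` and test space `P`;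
`s` stands for `(·,·)_U` and `c` for `(C ·, C ·)_D`. -/
theorem strong_constraint_error_residual_identity_general
    (s : Y →ₗ[R] Y →ₗ[R] R) (U : Submodule R Y) (u : Y) (hu : u ∈ U) (ru : Y →ₗ[R] R)
    (hstate : ∀ k, 1 ≤ k → k ≤ K → ∀ φ : P,
      m (y k - y (k - 1)) φ + τ * a (y k) φ = τ * ry k φ)
    (hadj : ∀ k, 1 ≤ k → k ≤ K → ∀ φ : Y,
      m φ (p k - p (k + 1)) + τ * a φ (p k) = τ * rp k φ - τ * c (y k) φ)
    (hopt : ∀ ψ ∈ U, s u ψ - m ψ (p 1) = ru ψ)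
    (hfin : p (K + 1) = 0) (hinit : y 0 = u) :
    s u u + τ * ∑ k ∈ Icc 1 K, c (y k) (y k)
      = -(τ * ∑ k ∈ Icc 1 K, ry k (p k)) + τ * ∑ k ∈ Icc 1 K, rp k (y k) + ru u := by
  have hdual := state_adjoint_residual_duality m a c τ K y p ry rp hstate hadj
  rw [hfin, map_zero, hinit] at hdual
  linear_combination hdual + hopt u hu

end BilinearForms

/-- Strong-constraint error-residual duality identity. -/
theorem strong_constraint_error_residual_identity
    {H Y D : Type*} [NormedAddCommGroup H] [InnerProductSpace ℝ H]
    [NormedAddCommGroup Y] [InnerProductSpace ℝ Y] [FiniteDimensional ℝ Y]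
    [NormedAddCommGroup D] [InnerProductSpace ℝ D]
    (ι : Y →ₗ[ℝ] H) (hι : Function.Injective ι)
    (U : Submodule ℝ Y)
    (a : Y →ₗ[ℝ] (Y →ₗ[ℝ] ℝ))
    (τ : ℝ) (hτ : 0 < τ) (K : ℕ) (hK : 1 ≤ K)
    (C : Y →ₗ[ℝ] D)
    (ey ep : ℕ → Y) (eu : Y) (heu : eu ∈ U)
    (ry rp : ℕ → (Y →ₗ[ℝ] ℝ)) (ru : Y →ₗ[ℝ] ℝ)
    (hstate : ∀ k, 1 ≤ k → k ≤ K → ∀ φ : Y,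
      ⟪ι (ey k - ey (k - 1)), ι φ⟫ + τ * a (ey k) φ = τ * ry k φ)
    (hadj : ∀ k, 1 ≤ k → k ≤ K → ∀ φ : Y,
      ⟪ι φ, ι (ep k - ep (k + 1))⟫ + τ * a φ (ep k)
        = τ * rp k φ - τ * ⟪C (ey k), C φ⟫)
    (hopt : ∀ ψ ∈ U, ⟪ι eu, ι ψ⟫ - ⟪ι ψ, ι (ep 1)⟫ = ru ψ)
    (hfin : ep (K + 1) = 0) (hinit : ey 0 = eu) :
    ‖ι eu‖ ^ 2 + τ * ∑ k ∈ Icc 1 K, ‖C (ey k)‖ ^ 2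
      = -(τ * ∑ k ∈ Icc 1 K, ry k (ep k))
        + τ * ∑ k ∈ Icc 1 K, rp k (ey k) + ru eu := by
  simp only [← real_inner_self_eq_norm_sq]
  exact strong_constraint_error_residual_identity_general ((innerₗ H).compl₁₂ ι ι) a
    ((innerₗ D).compl₁₂ C C) τ K ey ep ry rp ((innerₗ H).compl₁₂ ι ι) U eu heu ru
    hstate hadj hopt hfin hinit
end

section
/- Weak-constraint error-residual duality identity. Suppose e_y^0,…,e_y^K ∈ Y, e_p^1,…,e_p^{K+1} ∈ Y and e_u^1,…,e_u^K ∈ U, together with linear functionals r̃_y^1,…,r̃_y^K and r̃_p^1,…,r̃_p^K on Y and r̃_u^1,…,r̃_u^K on U, satisfy: (i) m(e_y^k − e_y^{k−1}, φ) + τ a(e_y^k, φ) = τ r̃_y^k(φ) + τ b(e_u^k, φ) for all φ ∈ Y and k = 1,…,K; (ii) m(φ, e_p^k − e_p^{k+1}) + τ a(φ, e_p^k) = τ r̃_p^k(φ) − τ (C e_y^k, C φ)_D for all φ ∈ Y and k = 1,…,K; (iii) (e_u^k, ψ)_U − b(ψ, e_p^k) = r̃_u^k(ψ) for all ψ ∈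 U and k = 1,…,K; with e_p^{K+1} = 0 and e_y^0 = 0. Then τ Σ_{k=1}^K ‖e_u^k‖_U² + τ Σ_{k=1}^K ‖C e_y^k‖_D² = −τ Σ_{k=1}^K r̃_y^k(e_p^k) + τ Σ_{k=1}^K r̃_p^k(e_y^k) + τ Σ_{k=1}^K r̃_u^k(e_u^k). -/
set_option autoImplicit false

open Finset RealInnerProductSpace

/-! Test the state equation with `ep k`, the adjoint equation with `ey k` and the optimality
condition with `eu k`: the terms in `a` and `b` cancel, and summation by parts in time turns the
difference terms into boundary terms, which vanish when `ey 0 = 0` and `ep (K + 1) = 0`. -/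

theorem sum_Icc_bilin_sub_by_parts {R M N P : Type*} [CommSemiring R]
    [AddCommGroup M] [Module R M] [AddCommGroup N] [Module R N] [AddCommGroup P] [Module R P]
    (B : M →ₗ[R] N →ₗ[R] P) (x : ℕ → M) (z : ℕ → N) (n : ℕ) :
    ∑ k ∈ Icc 1 n, (B (x k - x (k - 1)) (z k) - B (x k) (z k - z (k + 1)))
      = B (x n) (z (n + 1)) - B (x 0) (z 1) := by
  induction n with
  | zero => simp
  | succ n ih =>
    rw [sum_Icc_succ_top (Nat.le_add_left 1 n), ih, Nat.add_sub_cancel, map_sub, map_sub,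
      LinearMap.sub_apply]
    abel

theorem weak_constraint_error_residual_identity_general
    {H Y D : Type*} [SeminormedAddCommGroup H] [InnerProductSpace ℝ H]
    [AddCommGroup Y] [Module ℝ Y]
    [SeminormedAddCommGroup D] [InnerProductSpace ℝ D]
    (ι : Y →ₗ[ℝ] H) (U : Submodule ℝ Y)
    (a b : Y →ₗ[ℝ] Y →ₗ[ℝ] ℝ) (τ : ℝ) (K : ℕ) (C : Y →ₗ[ℝ] D)
    (ey ep eu : ℕ → Y) (heu : ∀ k, 1 ≤ k → k ≤ K → eu k ∈ U)
    (ry rp ru : ℕ → Y →ₗ[ℝ] ℝ)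
    (hstate : ∀ k, 1 ≤ k → k ≤ K → ∀ φ : Y,
      ⟪ι (ey k - ey (k - 1)), ι φ⟫ + τ * a (ey k) φ
        = τ * ry k φ + τ * b (eu k) φ)
    (hadj : ∀ k, 1 ≤ k → k ≤ K → ∀ φ : Y,
      ⟪ι φ, ι (ep k - ep (k + 1))⟫ + τ * a φ (ep k)
        = τ * rp k φ - τ * ⟪C (ey k), C φ⟫)
    (hopt : ∀ k, 1 ≤ k → k ≤ K → ∀ ψ ∈ U,
      ⟪ι (eu k), ι ψ⟫ - b ψ (ep k) = ru k ψ) :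
    τ * ∑ k ∈ Icc 1 K, ‖ι (eu k)‖ ^ 2 + τ * ∑ k ∈ Icc 1 K, ‖C (ey k)‖ ^ 2
      = -(τ * ∑ k ∈ Icc 1 K, ry k (ep k))
        + τ * ∑ k ∈ Icc 1 K, rp k (ey k)
        + τ * ∑ k ∈ Icc 1 K, ru k (eu k)
        + (⟪ι (ey K), ι (ep (K + 1))⟫ - ⟪ι (ey 0), ι (ep 1)⟫) := by
  let m : Y →ₗ[ℝ] Y →ₗ[ℝ] ℝ := (innerₗ H).compl₁₂ ι ι
  have one_step : ∀ k ∈ Icc 1 K,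
      τ * ‖ι (eu k)‖ ^ 2 + τ * ‖C (ey k)‖ ^ 2
        = -(τ * ry k (ep k)) + τ * rp k (ey k) + τ * ru k (eu k)
          + (m (ey k - ey (k - 1)) (ep k) - m (ey k) (ep k - ep (k + 1))) := by
    intro k hk
    obtain ⟨hk₁, hkK⟩ := mem_Icc.mp hk
    have state : m (ey k - ey (k - 1)) (ep k) + τ * a (ey k) (ep k)
        = τ * ry k (ep k) + τ * b (eu k) (ep k) := hstate k hk₁ hkK (ep k)
    have adjoint : m (ey k) (ep k - ep (k + 1)) + τ * a (ey k) (ep k)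
        = τ * rp k (ey k) - τ * ⟪C (ey k), C (ey k)⟫ := hadj k hk₁ hkK (ey k)
    have optimality := hopt k hk₁ hkK (eu k) (heu k hk₁ hkK)
    rw [real_inner_self_eq_norm_sq] at adjoint optimality
    linear_combination adjoint - state + τ * optimality
  have boundary :
      ∑ k ∈ Icc 1 K, (m (ey k - ey (k - 1)) (ep k) - m (ey k) (ep k - ep (k + 1)))
        = ⟪ι (ey K), ι (ep (K + 1))⟫ - ⟪ι (ey 0), ι (ep 1)⟫ :=
    sum_Icc_bilin_sub_by_parts m ey ep K
  simp only [mul_sum, ← sum_neg_distrib, ← sum_add_distrib]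
  rw [sum_congr rfl one_step, sum_add_distrib, boundary]

/-- Weak-constraint error-residual duality identity. -/
theorem weak_constraint_error_residual_identity
    {H Y D : Type*} [NormedAddCommGroup H] [InnerProductSpace ℝ H]
    [NormedAddCommGroup Y] [InnerProductSpace ℝ Y] [FiniteDimensional ℝ Y]
    [NormedAddCommGroup D] [InnerProductSpace ℝ D]
    (ι : Y →ₗ[ℝ] H) (hι : Function.Injective ι)
    (U : Submodule ℝ Y)
    (a : Y →ₗ[ℝ] (Y →ₗ[ℝ] ℝ))
    (τ : ℝ) (hτ : 0 < τ) (K : ℕ) (hK : 1 ≤ K)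
    (b : Y →ₗ[ℝ] (Y →ₗ[ℝ] ℝ))
    (C : Y →ₗ[ℝ] D)
    (ey ep eu : ℕ → Y) (heu : ∀ k, 1 ≤ k → k ≤ K → eu k ∈ U)
    (ry rp ru : ℕ → (Y →ₗ[ℝ] ℝ))
    (hstate : ∀ k, 1 ≤ k → k ≤ K → ∀ φ : Y,
      ⟪ι (ey k - ey (k - 1)), ι φ⟫ + τ * a (ey k) φ
        = τ * ry k φ + τ * b (eu k) φ)
    (hadj : ∀ k, 1 ≤ k → k ≤ K → ∀ φ : Y,
      ⟪ι φ, ι (ep k - ep (k + 1))⟫ + τ * a φ (ep k)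
        = τ * rp k φ - τ * ⟪C (ey k), C φ⟫)
    (hopt : ∀ k, 1 ≤ k → k ≤ K → ∀ ψ ∈ U,
      ⟪ι (eu k), ι ψ⟫ - b ψ (ep k) = ru k ψ)
    (hfin : ep (K + 1) = 0) (hinit : ey 0 = 0) :
    τ * ∑ k ∈ Icc 1 K, ‖ι (eu k)‖ ^ 2 + τ * ∑ k ∈ Icc 1 K, ‖C (ey k)‖ ^ 2
      = -(τ * ∑ k ∈ Icc 1 K, ry k (ep k))
        + τ * ∑ k ∈ Icc 1 K, rp k (ey k)
        + τ * ∑ k ∈ Icc 1 K, ru k (eu k) := by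
  simpa [hfin, hinit] using weak_constraint_error_residual_identity_general
    ι U a b τ K C ey ep eu heu ry rp ru hstate hadj hopt
end

section
/- Spatio-temporal energy estimate for the state error (inequality (eq10)). Suppose e_y^0,…,e_y^K ∈ Y and e_u ∈ U, together with linear functionals r_y^1,…,r_y^K on Y, satisfy m(e_y^k − e_y^{k−1}, φ) + τ a(e_y^k, φ) = τ r_y^k(φ) for all φ ∈ Y and k = 1,…,K, with e_y^0 = e_u. Then τ Σ_{k=1}^K ‖e_y^k‖_Y² ≤ (τ/α_LB²) Σ_{k=1}^K ‖r_y^k‖_{Y'}² + (1/α_LB) ‖e_u‖_U². -/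
set_option autoImplicit false

open Finset RealInnerProductSpace

/-! Test the scheme at time `k` with the error `e k` itself and double the result. Polarization
bounds twice the discrete time derivative below by `‖ι (e k)‖ ^ 2 - ‖ι (e (k - 1))‖ ^ 2`, which
telescopes. Young's inequality with weight `α` bounds the residual by `‖r k‖ ^ 2 / α` plus half of
the coercive term, and the other half survives. -/

theorem dualNorm_norm_univ_eq_norm {Y : Type*} [SeminormedAddCommGroup Y] [NormedSpace ℝ Y]
    (r : StrongDual ℝ Y) : dualNorm (fun v : Y => ‖v‖) Set.univ r = ‖r‖ := by
  have quotient_le : ‖r‖ ∈ upperBounds {x : ℝ | ∃ v ∈ Set.univ, v ≠ 0 ∧ x = r v / ‖v‖} := by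
    rintro x ⟨v, -, -, rfl⟩
    exact div_le_of_le_mul₀ (norm_nonneg v) (norm_nonneg r)
      ((le_abs_self _).trans (r.le_opNorm v))
  have abs_quotient_le {v : Y} (hv : v ≠ 0) :
      ‖r v‖ / ‖v‖ ≤ dualNorm (fun v : Y => ‖v‖) Set.univ r := by
    rcases abs_choice (r v) with h | h
    · exact le_csSup ⟨_, quotient_le⟩ ⟨v, Set.mem_univ v, hv, by rw [Real.norm_eq_abs, h]⟩
    · exact le_csSup ⟨_, quotient_le⟩
        ⟨-v, Set.mem_univ _, neg_ne_zero.mpr hv,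
          by simp only [Real.norm_eq_abs, h, map_neg, norm_neg]⟩
  apply le_antisymm (Real.sSup_le quotient_le (norm_nonneg r))
  rcases subsingleton_or_nontrivial Y with _ | _
  · simp [Subsingleton.eq_zero]
  · obtain ⟨w, hw⟩ := exists_ne (0 : Y)
    exact r.opNorm_le_bound' ((by positivity : 0 ≤ ‖r w‖ / ‖w‖).trans (abs_quotient_le hw))
      fun v hv => (div_le_iff₀ (by positivity)).mp (abs_quotient_le (ne_zero_of_norm_ne_zero hv))

theorem norm_sq_sub_norm_sq_le_two_mul_inner_sub {H : Type*} [SeminormedAddCommGroup H]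
    [InnerProductSpace ℝ H] (u v : H) : ‖u‖ ^ 2 - ‖v‖ ^ 2 ≤ 2 * ⟪u - v, u⟫ := by
  have polarization := norm_sub_sq_real u (u - v)
  rw [sub_sub_cancel, real_inner_comm] at polarization
  linarith [sq_nonneg ‖u - v‖]

theorem two_mul_apply_le_norm_sq_div_add {Y : Type*} [SeminormedAddCommGroup Y] [NormedSpace ℝ Y]
    (r : StrongDual ℝ Y) (v : Y) {α : ℝ} (hα : 0 < α) :
    2 * r v ≤ ‖r‖ ^ 2 / α + α * ‖v‖ ^ 2 :=
  calc
    2 * r v ≤ 2 * ‖v‖ * ‖r‖ := by linarith [(le_abs_self (r v)).trans (r.le_opNorm v)]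
    _ ≤ α * ‖v‖ ^ 2 + α⁻¹ * ‖r‖ ^ 2 := two_mul_le_add_mul_sq hα
    _ = ‖r‖ ^ 2 / α + α * ‖v‖ ^ 2 := by ring

theorem implicit_euler_step_energy_le {H Y : Type*} [SeminormedAddCommGroup H]
    [InnerProductSpace ℝ H] [SeminormedAddCommGroup Y] [NormedSpace ℝ Y]
    {u v : H} {y : Y} {r : StrongDual ℝ Y} {τ α c : ℝ} (hτ : 0 ≤ τ) (hα : 0 < α)
    (hc : α * ‖y‖ ^ 2 ≤ c) (hstep : ⟪u - v, u⟫ + τ * c = τ * r y) :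
    τ * ‖y‖ ^ 2 + 1 / α * ‖u‖ ^ 2 ≤ τ / α ^ 2 * ‖r‖ ^ 2 + 1 / α * ‖v‖ ^ 2 := by
  have hinner := norm_sq_sub_norm_sq_le_two_mul_inner_sub u v
  have habsorb : τ * (α * ‖y‖ ^ 2) ≤ τ * (2 * c - 2 * r y + ‖r‖ ^ 2 / α) := by
    gcongr
    linarith [two_mul_apply_le_norm_sq_div_add r y hα]
  calc
    τ * ‖y‖ ^ 2 + 1 / α * ‖u‖ ^ 2 = 1 / α * (τ * (α * ‖y‖ ^ 2) + ‖u‖ ^ 2) := by field_simp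
    _ ≤ 1 / α * (τ * (‖r‖ ^ 2 / α) + ‖v‖ ^ 2) := by
      gcongr 1 / α * ?_
      linarith
    _ = τ / α ^ 2 * ‖r‖ ^ 2 + 1 / α * ‖v‖ ^ 2 := by field_simp

theorem sum_Icc_add_le_of_step_le {M : Type*} [AddCommMonoid M] [PartialOrder M]
    [IsOrderedAddMonoid M] {f g E : ℕ → M} {n : ℕ}
    (hstep : ∀ k < n, f (k + 1) + E (k + 1) ≤ g (k + 1) + E k) :
    ∑ k ∈ Icc 1 n, f k + E n ≤ ∑ k ∈ Icc 1 n, g k + E 0 := by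
  induction n with
  | zero => simp
  | succ n ih =>
    rw [sum_Icc_succ_top (by lia), sum_Icc_succ_top (by lia)]
    calc
      ∑ k ∈ Icc 1 n, f k + f (n + 1) + E (n + 1)
          ≤ ∑ k ∈ Icc 1 n, f k + (g (n + 1) + E n) := by
        rw [add_assoc]
        gcongr ∑ k ∈ Icc 1 n, f k + ?_
        exact hstep n n.lt_succ_self
      _ = ∑ k ∈ Icc 1 n, f k + E n + g (n + 1) := by abel
      _ ≤ ∑ k ∈ Icc 1 n, g k + E 0 + g (n + 1) := by
        gcongr ?_ + _
        exact ih fun k hk => hstep k (hk.trans n.lt_succ_self)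
      _ = ∑ k ∈ Icc 1 n, g k + g (n + 1) + E 0 := by abel

theorem state_error_energy_estimate_general {H Y : Type*} [SeminormedAddCommGroup H]
    [InnerProductSpace ℝ H] [SeminormedAddCommGroup Y] [NormedSpace ℝ Y]
    (ι : Y →ₗ[ℝ] H) (a : Y → Y → ℝ) {τ α : ℝ} (hτ : 0 ≤ τ) (hα : 0 < α)
    (hcoer : ∀ v, α * ‖v‖ ^ 2 ≤ a v v) {e : ℕ → Y} {r : ℕ → StrongDual ℝ Y} {K : ℕ}
    (hstate : ∀ k, 1 ≤ k → k ≤ K → ∀ φ : Y,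
      ⟪ι (e k - e (k - 1)), ι φ⟫ + τ * a (e k) φ = τ * r k φ) :
    τ * ∑ k ∈ Icc 1 K, ‖e k‖ ^ 2 + 1 / α * ‖ι (e K)‖ ^ 2
      ≤ τ / α ^ 2 * ∑ k ∈ Icc 1 K, ‖r k‖ ^ 2 + 1 / α * ‖ι (e 0)‖ ^ 2 := by
  rw [mul_sum, mul_sum]
  refine sum_Icc_add_le_of_step_le (E := fun k => 1 / α * ‖ι (e k)‖ ^ 2) fun k hk => ?_
  refine implicit_euler_step_energy_le hτ hα (hcoer (e (k + 1))) ?_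
  simpa only [Nat.add_sub_cancel, map_sub] using hstate (k + 1) k.succ_pos hk (e (k + 1))

/-- Spatio-temporal energy estimate for the state error. -/
theorem state_error_energy_estimate
    {H Y : Type*} [NormedAddCommGroup H] [InnerProductSpace ℝ H]
    [NormedAddCommGroup Y] [InnerProductSpace ℝ Y] [FiniteDimensional ℝ Y]
    (ι : Y →ₗ[ℝ] H) (hι : Function.Injective ι)
    (U : Submodule ℝ Y)
    (a : Y →ₗ[ℝ] (Y →ₗ[ℝ] ℝ))
    (τ : ℝ) (hτ : 0 < τ) (K : ℕ) (hK : 1 ≤ K)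
    (αLB : ℝ) (hαLB : 0 < αLB) (hcoer : ∀ v : Y, αLB * ‖v‖ ^ 2 ≤ a v v)
    (ey : ℕ → Y) (eu : Y) (heu : eu ∈ U)
    (ry : ℕ → (Y →ₗ[ℝ] ℝ))
    (hstate : ∀ k, 1 ≤ k → k ≤ K → ∀ φ : Y,
      ⟪ι (ey k - ey (k - 1)), ι φ⟫ + τ * a (ey k) φ = τ * ry k φ)
    (hinit : ey 0 = eu) :
    τ * ∑ k ∈ Icc 1 K, ‖ey k‖ ^ 2
      ≤ τ / αLB ^ 2 * ∑ k ∈ Icc 1 K, (dualNorm (fun v : Y => ‖v‖) Set.univ ⇑(ry k)) ^ 2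
        + (1 / αLB) * ‖ι eu‖ ^ 2 := by
  simp only [← hinit, fun k => dualNorm_norm_univ_eq_norm (ry k).toContinuousLinearMap,
    ← LinearMap.coe_toContinuousLinearMap']
  exact (le_add_of_nonneg_right (by positivity)).trans
    (state_error_energy_estimate_general ι (fun v => a v) hτ.le hαLB hcoer hstate)
end
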